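/- arXiv:0906.0208 — 3 statements merged into one kernel-verified Lean document; each statement's English description precedes it below -/
import Mathlib

section
/- Let (x_n)_{n≥0} be a sequence of nonnegative real numbers, let A, B ≥ 0 and 0 < α < 1, and suppose x_{n+1} ≤ A + B·x_n^α for all n. Then there exists a constant g(α) > 1, depending only on α (and independent of A, B and the sequence), such that limsup_n x_n ≤ g(α)·max(A, B^{1/(1−α)}); in particular, the sequence (x_n) is bounded. -/
open Set Filter

noncomputable section

/-- The parabolic distance on `[0,T] × ℝ`:
`d_p((t₁,x₁),(t₂,x₂)) = √|t₁−t₂| + |x₁−x₂|`. -/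
def pd (t₁ x₁ t₂ x₂ : ℝ) : ℝ := Real.sqrt |t₁ - t₂| + |x₁ - x₂|

/-- Sup-norm `‖u‖₀` of `u` over `[0,T] × ℝ`. -/
def supN (T : ℝ) (u : ℝ → ℝ → ℝ) : ℝ :=
  sInf {M : ℝ | 0 ≤ M ∧ ∀ t ∈ Icc (0:ℝ) T, ∀ x : ℝ, |u t x| ≤ M}

/-- One-sided supremum `sup u` of `u` over `[0,T] × ℝ`. -/
def supU (T : ℝ) (u : ℝ → ℝ → ℝ) : ℝ :=
  sInf {M : ℝ | ∀ t ∈ Icc (0:ℝ) T, ∀ x : ℝ, u t x ≤ M}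

/-- The parabolic `α`-Hölder seminorm `[u]_α` of `u` over `[0,T] × ℝ`. -/
def hSemi (T α : ℝ) (u : ℝ → ℝ → ℝ) : ℝ :=
  sInf {K : ℝ | 0 ≤ K ∧ ∀ t₁ ∈ Icc (0:ℝ) T, ∀ t₂ ∈ Icc (0:ℝ) T, ∀ x₁ x₂ : ℝ,
    |u t₁ x₁ - u t₂ x₂| ≤ K * pd t₁ x₁ t₂ x₂ ^ α}

/-- The Hölder norm `‖u‖_α = ‖u‖₀ + [u]_α`. -/
def hNorm (T α : ℝ) (u : ℝ → ℝ → ℝ) : ℝ := supN T u + hSemi T α u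

/-- The weighted sup-norm `‖u‖_β = sup_{(t,x)} e^{−β(T−t)} |u(t,x)|`. -/
def wNorm (T β : ℝ) (u : ℝ → ℝ → ℝ) : ℝ :=
  sInf {M : ℝ | 0 ≤ M ∧ ∀ t ∈ Icc (0:ℝ) T, ∀ x : ℝ, Real.exp (-β * (T - t)) * |u t x| ≤ M}

/-- Membership in `C^α([0,T]×ℝ)`: bounded, continuous, with finite parabolic
`α`-Hölder constant. -/
def MemCa (T α : ℝ) (u : ℝ → ℝ → ℝ) : Prop :=
  ContinuousOn (fun p : ℝ × ℝ => u p.1 p.2) (Icc (0:ℝ) T ×ˢ (univ : Set ℝ)) ∧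
  (∃ M : ℝ, ∀ t ∈ Icc (0:ℝ) T, ∀ x : ℝ, |u t x| ≤ M) ∧
  (∃ K : ℝ, ∀ t₁ ∈ Icc (0:ℝ) T, ∀ t₂ ∈ Icc (0:ℝ) T, ∀ x₁ x₂ : ℝ,
    |u t₁ x₁ - u t₂ x₂| ≤ K * pd t₁ x₁ t₂ x₂ ^ α)

/-- Membership in `C^{1,2+α}([0,T]×ℝ)`: `u ∈ C^α`, and the partial derivatives
`u_t`, `u_x`, `u_xx` exist on `(0,T) × ℝ` and are (extended to) the `C^α` functions
`ut`, `ux`, `uxx`. -/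
structure MemC12a (T α : ℝ) (u ut ux uxx : ℝ → ℝ → ℝ) : Prop where
  memU : MemCa T α u
  memUt : MemCa T α ut
  memUx : MemCa T α ux
  memUxx : MemCa T α uxx
  hasUt : ∀ t ∈ Ioo (0:ℝ) T, ∀ x : ℝ, HasDerivAt (fun s => u s x) (ut t x) t
  hasUx : ∀ t ∈ Ioo (0:ℝ) T, ∀ x : ℝ, HasDerivAt (fun y => u t y) (ux t x) x
  hasUxx : ∀ t ∈ Ioo (0:ℝ) T, ∀ x : ℝ, HasDerivAt (fun y => ux t y) (uxx t x) x

/-- Sup-norm `‖g‖₀` of a function `g : ℝ → ℝ`. -/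
def gSupN (g : ℝ → ℝ) : ℝ := sInf {M : ℝ | 0 ≤ M ∧ ∀ x : ℝ, |g x| ≤ M}

/-- `α`-Hölder constant of a function `g : ℝ → ℝ`. -/
def gHSemi (α : ℝ) (g : ℝ → ℝ) : ℝ :=
  sInf {K : ℝ | 0 ≤ K ∧ ∀ x y : ℝ, |g x - g y| ≤ K * |x - y| ^ α}

/-- Membership in `C^{2+α}(ℝ)`: twice continuously differentiable, with `g`, `g'`, `g''`
bounded and `g''` `α`-Hölder. -/
def MemC2a (α : ℝ) (g : ℝ → ℝ) : Prop :=
  ContDiff ℝ 2 g ∧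
  (∃ M : ℝ, ∀ x : ℝ, |g x| ≤ M ∧ |deriv g x| ≤ M ∧ |deriv (deriv g) x| ≤ M) ∧
  (∃ K : ℝ, ∀ x y : ℝ, |deriv (deriv g) x - deriv (deriv g) y| ≤ K * |x - y| ^ α)

/-- The `C^{2+α}(ℝ)` norm: `‖g‖_{2+α} = ‖g‖₀ + ‖g'‖₀ + ‖g''‖₀ + [g'']_α`. -/
def gNorm2a (α : ℝ) (g : ℝ → ℝ) : ℝ :=
  gSupN g + gSupN (deriv g) + gSupN (deriv (deriv g)) + gHSemi α (deriv (deriv g))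

/-- a recursive-inequality bound. -/
theorem stmt_0 (α : ℝ) (hα0 : 0 < α) (hα1 : α < 1) :
    ∃ g : ℝ, 1 < g ∧
      ∀ (A B : ℝ) (x : ℕ → ℝ), 0 ≤ A → 0 ≤ B → (∀ n : ℕ, 0 ≤ x n) →
        (∀ n : ℕ, x (n + 1) ≤ A + B * x n ^ α) →
        Filter.limsup x Filter.atTop ≤ g * max A (B ^ (1 / (1 - α))) ∧
        BddAbove (Set.range x) := by
  have h1 : 0 < 1 - α := by linarith
  refine ⟨(2 - α) / (1 - α), by rw [lt_div_iff₀ h1]; linarith, ?_⟩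
  intro A B x hA hB hx hrec
  set C := B ^ (1 / (1 - α)) with hC
  have hC0 : 0 ≤ C := Real.rpow_nonneg hB _
  have hCB : C ^ (1 - α) = B := by
    rw [hC, ← Real.rpow_mul hB, one_div, inv_mul_cancel₀ h1.ne', Real.rpow_one]
  set K := (2 - α) / (1 - α) * max A C with hK
  have hKe : (2 - α) * max A C + α * K = K := by
    rw [hK]; field_simp; ring
  have step : ∀ n, x (n + 1) ≤ (2 - α) * max A C + α * x n := by
    intro n
    have h := Real.geom_mean_le_arith_mean2_weighted h1.le hα0.le hC0 (hx n) (by ring)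
    rw [hCB] at h
    have h2 := hrec n
    have h3 : (1 - α) * C ≤ (1 - α) * max A C :=
      mul_le_mul_of_nonneg_left (le_max_right A C) h1.le
    have h4 := le_max_left A C
    linarith
  have bound : ∀ n, x n ≤ K + α ^ n * x 0 := by
    intro n
    induction n with
    | zero =>
      have : 0 ≤ K := mul_nonneg (div_nonneg (by linarith) h1.le) (le_max_of_le_left hA)
      simpa using this
    | succ n ih =>
      have h2 := mul_le_mul_of_nonneg_left ih hα0.le
      have h3 := step n
      rw [pow_succ]
      linarith
  have ht : Tendsto (fun n : ℕ => K + α ^ n * x 0) atTop (nhds K) := by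
    have := ((tendsto_pow_atTop_nhds_zero_of_lt_one hα0.le hα1).mul_const (x 0)).const_add K
    simpa using this
  constructor
  · rw [← ht.limsup_eq]
    refine limsup_le_limsup (Eventually.of_forall bound) ?_ ht.isBoundedUnder_le
    exact IsBoundedUnder.isCoboundedUnder_le ⟨0, by
      simpa using (Eventually.of_forall hx : ∀ᶠ n in atTop, 0 ≤ x n)⟩
  · refine ⟨K + x 0, ?_⟩
    rintro _ ⟨n, rfl⟩
    have h2 := mul_le_of_le_one_left (hx 0) (pow_le_one₀ (n := n) hα0.le hα1.le)
    linarith [bound n]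
end
end

section
/- Let g ∈ C^{2+α}(ℝ), h, a, b ∈ C^α([0,T]×ℝ), γ > 0, with a ≥ 0 and b ≥ 0 pointwise, and let u ∈ C^{1,2+α}([0,T]×ℝ) solve 0 = u_t + ½u_xx + h·u_x + a − b·e^{γu} on [0,T)×ℝ with u(T,·) = g. Then for all (t,x) ∈ [0,T]×ℝ: −(1/γ)·log(e^{γ‖g‖₀} + γT‖b‖₀) ≤ u(t,x) ≤ ‖g‖₀ + T‖a‖₀. -/
open Set Filter

noncomputable section

/-- `u` (with derivative extensions `ut, ux, uxx`) solves the semilinear Cauchy problem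
`0 = u_t + ½ u_xx + h u_x + a − b e^{γu}` on `[0,T) × ℝ`, `u(T,·) = g`. -/
def SolvesSemi (T γ : ℝ) (h a b : ℝ → ℝ → ℝ) (g : ℝ → ℝ) (ut ux uxx : ℝ → ℝ → ℝ)
    (u : ℝ → ℝ → ℝ) : Prop :=
  (∀ t ∈ Ico (0:ℝ) T, ∀ x : ℝ,
    ut t x + (1/2) * uxx t x + h t x * ux t x + a t x
      - b t x * Real.exp (γ * u t x) = 0) ∧
  ∀ x : ℝ, u T x = g x

/-- If a function has a global max at `x`, its second derivative is nonpositive there. -/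
theorem aux_second (f f' : ℝ → ℝ) (c x : ℝ) (hf : ∀ y, HasDerivAt f (f' y) y)
    (hf' : HasDerivAt f' c x) (hmax : ∀ y, f y ≤ f x) : f' x = 0 ∧ c ≤ 0 := by
  have hmx : IsLocalMax f x := Filter.Eventually.of_forall hmax
  have h0 : f' x = 0 := hmx.hasDerivAt_eq_zero (hf x)
  refine ⟨h0, ?_⟩
  by_contra hc
  push Not at hc
  have hd : deriv f = f' := funext fun y => (hf y).deriv
  have hmin : IsLocalMin f x := by
    apply isLocalMin_of_deriv_deriv_pos
    · rw [hd, hf'.deriv]; exact hc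
    · rw [hd, h0]
    · exact (hf x).continuousAt
  have he : f =ᶠ[nhds x] fun _ => f x := by
    filter_upwards [hmin] with y hy
    exact le_antisymm (hmax y) hy
  have he2 : f' =ᶠ[nhds x] fun _ => 0 := by
    have := he.deriv
    rw [hd] at this
    filter_upwards [this] with y hy
    rw [hy]; simp
  have := he2.deriv_eq
  rw [hf'.deriv] at this
  simp at this
  linarith

theorem aux_max (T H M : ℝ) (hH : 0 ≤ H) (hM : 0 ≤ M)
    (h w wt wx wxx : ℝ → ℝ → ℝ)
    (hh : ∀ t ∈ Icc (0:ℝ) T, ∀ x : ℝ, |h t x| ≤ H)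
    (hwM : ∀ t ∈ Icc (0:ℝ) T, ∀ x : ℝ, w t x ≤ M)
    (hc : ContinuousOn (fun p : ℝ × ℝ => w p.1 p.2) (Icc (0:ℝ) T ×ˢ (univ : Set ℝ)))
    (hwt : ∀ t ∈ Ioo (0:ℝ) T, ∀ x : ℝ, HasDerivAt (fun s => w s x) (wt t x) t)
    (hwx : ∀ t ∈ Ioo (0:ℝ) T, ∀ x : ℝ, HasDerivAt (fun y => w t y) (wx t x) x)
    (hwxx : ∀ t ∈ Ioo (0:ℝ) T, ∀ x : ℝ, HasDerivAt (fun y => wx t y) (wxx t x) x)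
    (hL : ∀ t ∈ Ioo (0:ℝ) T, ∀ x : ℝ, 0 < w t x →
      0 ≤ wt t x + (1/2) * wxx t x + h t x * wx t x)
    (hend : ∀ x, w T x ≤ 0) :
    ∀ t ∈ Ioo (0:ℝ) T, ∀ x : ℝ, w t x ≤ 0 := by
  intro t₀ ht₀ x₀
  by_contra hpos
  push Not at hpos
  set K := H + 2 with hK
  obtain ⟨ε, hε, hεw⟩ : ∃ ε > 0, ε * (Real.exp (K * (T - t₀)) * (1 + x₀^2)) < w t₀ x₀ := by
    have hP : 0 < Real.exp (K * (T - t₀)) * (1 + x₀^2) := by positivity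
    refine ⟨w t₀ x₀ / 2 / (Real.exp (K * (T - t₀)) * (1 + x₀^2)), by positivity, ?_⟩
    rw [div_mul_cancel₀ _ hP.ne']
    linarith
  set v : ℝ → ℝ → ℝ := fun t x => w t x - ε * (Real.exp (K * (T - t)) * (1 + x^2)) with hv
  have hv0 : 0 < v t₀ x₀ := by simp only [hv]; linarith
  set R := |x₀| + M / ε + 1 with hR
  have hMe : 0 ≤ M / ε := by positivity
  have hR1 : 1 ≤ R := by have := abs_nonneg x₀; linarith
  have hcomp : IsCompact (Icc t₀ T ×ˢ Icc (-R) R) := isCompact_Icc.prod isCompact_Icc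
  have hx₀ : x₀ ∈ Icc (-R) R := by
    have := abs_le.mp (show |x₀| ≤ R by linarith)
    exact this
  have hvc : ContinuousOn (fun p : ℝ × ℝ => v p.1 p.2) (Icc t₀ T ×ˢ Icc (-R) R) := by
    apply ContinuousOn.sub
    · apply hc.mono
      exact prod_mono (Icc_subset_Icc_left ht₀.1.le) (subset_univ _)
    · apply Continuous.continuousOn
      fun_prop
  obtain ⟨⟨t, x⟩, ⟨htm, hxm⟩, hmax⟩ := hcomp.exists_isMaxOn
    ⟨(t₀, x₀), ⟨⟨le_refl _, ht₀.2.le⟩, hx₀⟩⟩ hvc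
  simp only at htm hxm
  have hmax' : ∀ s ∈ Icc t₀ T, ∀ y ∈ Icc (-R) R, v s y ≤ v t x := fun s hs y hy =>
    hmax (show (s, y) ∈ Icc t₀ T ×ˢ Icc (-R) R from ⟨hs, hy⟩)
  have hvt : 0 < v t x := hv0.trans_le (hmax' t₀ ⟨le_refl _, ht₀.2.le⟩ x₀ hx₀)
  have hψ : 0 < Real.exp (K * (T - t)) * (1 + x^2) := by positivity
  have hwpos : 0 < w t x := by
    have : 0 < ε * (Real.exp (K * (T - t)) * (1 + x^2)) := by positivity
    simp only [hv] at hvt; linarith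
  have htT : t < T := by
    rcases lt_or_eq_of_le htm.2 with h1 | h1
    · exact h1
    · rw [h1] at hwpos; linarith [hend x]
  have ht : t ∈ Ioo (0:ℝ) T := ⟨ht₀.1.trans_le htm.1, htT⟩
  have hmaxx : ∀ y, v t y ≤ v t x := by
    intro y
    by_cases hy : y ∈ Icc (-R) R
    · exact hmax' t htm y hy
    · have hy2 : R < |y| := by
        by_contra hcon
        exact hy (abs_le.mp (not_lt.mp hcon))
      have hy3 : M / ε ≤ y^2 := by
        rw [← sq_abs]
        have := abs_nonneg x₀
        nlinarith
      have hy4 : M ≤ ε * y^2 := by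
        rw [div_le_iff₀ hε] at hy3; linarith
      have he : 1 ≤ Real.exp (K * (T - t)) := by
        apply Real.one_le_exp
        apply mul_nonneg <;> linarith
      have := hwM t ⟨ht.1.le, ht.2.le⟩ y
      have h5 : ε * y^2 ≤ ε * (Real.exp (K * (T - t)) * (1 + y^2)) := by
        apply mul_le_mul_of_nonneg_left _ hε.le
        nlinarith [sq_nonneg y]
      have : v t y ≤ 0 := by simp only [hv]; linarith
      linarith
  -- spatial derivatives
  obtain ⟨hvx, hvxx⟩ := aux_second (fun y => v t y)
    (fun y => wx t y - ε * (Real.exp (K * (T - t)) * (2 * y)))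
    (wxx t x - ε * (Real.exp (K * (T - t)) * 2)) x
    (by
      intro y
      have h1 : HasDerivAt (fun y : ℝ => 1 + y^2) (2 * y) y := by
        simpa using (hasDerivAt_pow 2 y).const_add 1
      exact (hwx t ht y).sub ((h1.const_mul _).const_mul _))
    (by
      have h1 : HasDerivAt (fun y : ℝ => 2 * y) 2 x := by
        simpa using (hasDerivAt_id x).const_mul 2
      exact (hwxx t ht x).sub ((h1.const_mul _).const_mul _))
    hmaxx
  -- time derivative
  have hdt : HasDerivAt (fun s => v s x)
      (wt t x - ε * (Real.exp (K * (T - t)) * (-K) * (1 + x^2))) t := by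
    have h1 : HasDerivAt (fun s : ℝ => K * (T - s)) (-K) t := by
      simpa using ((hasDerivAt_id t).const_sub T).const_mul K
    exact (hwt t ht x).sub ((h1.exp.mul_const _).const_mul _)
  have hvtle : wt t x - ε * (Real.exp (K * (T - t)) * (-K) * (1 + x^2)) ≤ 0 := by
    have h2 := (hasDerivWithinAt_iff_tendsto_slope' (s := Ioi t) (by simp)).mp
      (hdt.hasDerivWithinAt (s := Ioi t))
    refine le_of_tendsto h2 ?_
    filter_upwards [Ioo_mem_nhdsGT htT] with s hs
    rw [slope_def_field]
    apply div_nonpos_of_nonpos_of_nonneg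
    · have := hmax' s ⟨htm.1.trans hs.1.le, hs.2.le⟩ x hxm
      linarith
    · linarith [hs.1]
  have hLw := hL t ht x hwpos
  have hhb := hh t ⟨ht.1.le, ht.2.le⟩ x
  set E := Real.exp (K * (T - t)) with hE
  have hEp : 0 < E := Real.exp_pos _
  have hwx' : wx t x = ε * (E * (2 * x)) := by linarith
  have hx2 : h t x * (2 * x) ≤ H * (1 + x^2) := by
    calc h t x * (2 * x) ≤ |h t x * (2 * x)| := le_abs_self _
      _ = |h t x| * |2 * x| := abs_mul _ _
      _ ≤ H * (1 + x^2) := by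
        apply mul_le_mul hhb _ (abs_nonneg _) hH
        rw [abs_le]; constructor <;> nlinarith [sq_nonneg (x - 1), sq_nonneg (x + 1)]
  rw [hwx'] at hLw
  have hεE : 0 < ε * E := by positivity
  have key : 0 ≤ (ε * E) * (-K * (1 + x^2) + 1 + h t x * (2 * x)) := by
    nlinarith
  have : -K * (1 + x^2) + 1 + h t x * (2 * x) < 0 := by
    rw [hK]; nlinarith [sq_nonneg x]
  nlinarith

theorem aux_gSup (g : ℝ → ℝ) (hg : ∃ M : ℝ, ∀ x, |g x| ≤ M) :
    0 ≤ gSupN g ∧ ∀ x, |g x| ≤ gSupN g := by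
  obtain ⟨M, hM⟩ := hg
  have hne : {M : ℝ | 0 ≤ M ∧ ∀ x : ℝ, |g x| ≤ M}.Nonempty :=
    ⟨M, (abs_nonneg _).trans (hM 0), hM⟩
  exact ⟨le_csInf hne fun b hb => hb.1, fun x => le_csInf hne fun b hb => hb.2 x⟩

theorem aux_sup (T : ℝ) (hT : 0 < T) (u : ℝ → ℝ → ℝ)
    (hu : ∃ M : ℝ, ∀ t ∈ Icc (0:ℝ) T, ∀ x : ℝ, |u t x| ≤ M) :
    0 ≤ supN T u ∧ ∀ t ∈ Icc (0:ℝ) T, ∀ x, |u t x| ≤ supN T u := by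
  obtain ⟨M, hM⟩ := hu
  have hne : {M : ℝ | 0 ≤ M ∧ ∀ t ∈ Icc (0:ℝ) T, ∀ x : ℝ, |u t x| ≤ M}.Nonempty :=
    ⟨M, (abs_nonneg _).trans (hM 0 ⟨le_refl _, hT.le⟩ 0), hM⟩
  exact ⟨le_csInf hne fun b hb => hb.1, fun t ht x => le_csInf hne fun b hb => hb.2 t ht x⟩

/-- Extension of pointwise bounds to the closed interval. -/
theorem aux_close (T : ℝ) (hT : 0 < T) (u : ℝ → ℝ → ℝ) (m N : ℝ)
    (hc : ContinuousOn (fun p : ℝ × ℝ => u p.1 p.2) (Icc (0:ℝ) T ×ˢ (univ : Set ℝ)))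
    (hb : ∀ t ∈ Ioo (0:ℝ) T, ∀ x : ℝ, m ≤ u t x ∧ u t x ≤ N) :
    ∀ t ∈ Icc (0:ℝ) T, ∀ x : ℝ, m ≤ u t x ∧ u t x ≤ N := by
  intro t ht x
  have hcx : ContinuousOn (fun s => u s x) (Icc (0:ℝ) T) :=
    hc.comp (f := fun s : ℝ => (s, x)) (by fun_prop) (fun s hs => ⟨hs, mem_univ _⟩)
  have hcl : closure (Ioo (0:ℝ) T) = Icc 0 T := closure_Ioo hT.ne
  rw [← hcl] at hcx ht
  have : MapsTo (fun s => u s x) (Ioo 0 T) (Icc m N) := fun s hs => hb s hs x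
  have h2 := this.closure_of_continuousOn hcx ht
  rwa [isClosed_Icc.closure_eq] at h2

/-- pointwise bounds for the solution of the semilinear Cauchy problem. -/
theorem stmt_3 (T α γ : ℝ) (hT : 0 < T) (hα0 : 0 < α) (hα1 : α ≤ 1) (hγ : 0 < γ)
    (h a b : ℝ → ℝ → ℝ) (g : ℝ → ℝ)
    (hh : MemCa T α h) (ha : MemCa T α a) (hb : MemCa T α b) (hg : MemC2a α g)
    (hapos : ∀ t ∈ Icc (0:ℝ) T, ∀ x : ℝ, 0 ≤ a t x)
    (hbpos : ∀ t ∈ Icc (0:ℝ) T, ∀ x : ℝ, 0 ≤ b t x)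
    (u ut ux uxx : ℝ → ℝ → ℝ)
    (hmem : MemC12a T α u ut ux uxx) (hsol : SolvesSemi T γ h a b g ut ux uxx u) :
    ∀ t ∈ Icc (0:ℝ) T, ∀ x : ℝ,
      -(1/γ) * Real.log (Real.exp (γ * gSupN g) + γ * T * supN T b) ≤ u t x ∧
      u t x ≤ gSupN g + T * supN T a := by
  obtain ⟨hucont, hubd, -⟩ := hmem.memU
  obtain ⟨-, hhbd, -⟩ := hh
  obtain ⟨hH0, hH⟩ := aux_sup T hT h hhbd
  obtain ⟨hA0, hA⟩ := aux_sup T hT a ha.2.1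
  obtain ⟨hB0, hB⟩ := aux_sup T hT b hb.2.1
  obtain ⟨hU0, hU⟩ := aux_sup T hT u hubd
  obtain ⟨hG0, hG⟩ := aux_gSup g (by
    obtain ⟨M, hM⟩ := hg.2.1
    exact ⟨M, fun x => (hM x).1⟩)
  obtain ⟨hpde, hterm⟩ := hsol
  set A := supN T a
  set B := supN T b
  set G := gSupN g
  set U := supN T u
  set H := supN T h
  apply aux_close T hT u _ _ hucont
  have hup := aux_max T H U hH0 hU0 h (fun t x => u t x - (G + A * (T - t)))
    (fun t x => ut t x + A) ux uxx hH
    (by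
      intro t ht x
      have h1 := (abs_le.mp (hU t ht x)).2
      have h2 : 0 ≤ A * (T - t) := mul_nonneg hA0 (by linarith [ht.2])
      linarith)
    (by
      apply hucont.sub
      apply Continuous.continuousOn
      fun_prop)
    (by
      intro t ht x
      have h1 : HasDerivAt (fun s : ℝ => G + A * (T - s)) (-A) t := by
        simpa using (((hasDerivAt_id t).const_sub T).const_mul A).const_add G
      have h2 := (hmem.hasUt t ht x).sub h1
      rw [sub_neg_eq_add] at h2
      exact h2)
    (by
      intro t ht x
      exact (hmem.hasUx t ht x).sub_const _)
    hmem.hasUxx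
    (by
      intro t ht x _
      have h1 := hpde t ⟨ht.1.le, ht.2⟩ x
      have h2 := (abs_le.mp (hA t ⟨ht.1.le, ht.2.le⟩ x)).2
      have h3 : 0 ≤ b t x * Real.exp (γ * u t x) :=
        mul_nonneg (hbpos t ⟨ht.1.le, ht.2.le⟩ x) (Real.exp_pos _).le
      linarith)
    (by
      intro x
      have := (abs_le.mp (hG x)).2
      simp only [hterm x, sub_self, mul_zero]
      linarith)
  set E : ℝ → ℝ := fun t => Real.exp (γ * G) + γ * B * (T - t) with hE
  have hE1 : ∀ t ≤ T, 1 ≤ E t := by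
    intro t ht
    have h1 : 1 ≤ Real.exp (γ * G) := Real.one_le_exp (by positivity)
    have h2 : 0 ≤ γ * B * (T - t) := mul_nonneg (by positivity) (by linarith)
    simp only [hE]; linarith
  have hlow := aux_max T H U hH0 hU0 h (fun t x => -(1/γ) * Real.log (E t) - u t x)
    (fun t x => B / E t - ut t x) (fun t x => - ux t x) (fun t x => - uxx t x) hH
    (by
      intro t ht x
      have h1 := (abs_le.mp (hU t ht x)).1
      have h2 : 0 ≤ (1/γ) * Real.log (E t) :=
        mul_nonneg (by positivity) (Real.log_nonneg (hE1 t ht.2))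
      linarith)
    (by
      refine ContinuousOn.sub ?_ hucont
      refine continuousOn_const.mul (ContinuousOn.log ?_ ?_)
      · apply Continuous.continuousOn
        fun_prop
      · intro p hp
        have := hE1 p.1 hp.1.2
        positivity)
    (by
      intro t ht x
      have hEp : 0 < E t := by linarith [hE1 t ht.2.le]
      have h1 : HasDerivAt E (-(γ * B)) t := by
        have h0 := (((hasDerivAt_id t).const_sub T).const_mul (γ * B)).const_add
          (Real.exp (γ * G))
        rw [mul_neg_one] at h0
        exact h0
      have h2 := (h1.log hEp.ne').const_mul (-(1/γ))
      have h3 : -(1/γ) * (-(γ * B) / E t) = B / E t := by field_simp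
      rw [h3] at h2
      exact h2.sub (hmem.hasUt t ht x))
    (by
      intro t ht x
      exact (hmem.hasUx t ht x).const_sub _)
    (by
      intro t ht x
      exact (hmem.hasUxx t ht x).neg)
    (by
      intro t ht x hw
      have hEp : 0 < E t := by linarith [hE1 t ht.2.le]
      have h1 := hpde t ⟨ht.1.le, ht.2⟩ x
      have h2 := (abs_le.mp (hB t ⟨ht.1.le, ht.2.le⟩ x)).2
      have h4 := hapos t ⟨ht.1.le, ht.2.le⟩ x
      have h5 : γ * u t x ≤ - Real.log (E t) := by
        have h6 : u t x ≤ -(1/γ) * Real.log (E t) := by linarith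
        calc γ * u t x ≤ γ * (-(1/γ) * Real.log (E t)) := mul_le_mul_of_nonneg_left h6 hγ.le
          _ = - Real.log (E t) := by field_simp
      have h7 : Real.exp (γ * u t x) ≤ (E t)⁻¹ := by
        have := Real.exp_le_exp.mpr h5
        rwa [Real.exp_neg, Real.exp_log hEp] at this
      have h3 : b t x * Real.exp (γ * u t x) ≤ B / E t := by
        rw [div_eq_mul_inv]
        exact mul_le_mul h2 h7 (Real.exp_pos _).le hB0
      linarith)
    (by
      intro x
      have := (abs_le.mp (hG x)).1
      have h1 : E T = Real.exp (γ * G) := by simp [hE]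
      have h2 : -(1/γ) * (γ * G) = -G := by field_simp
      simp only [h1, Real.log_exp, h2, hterm x]
      linarith)
  intro t ht x
  have h1 := hup t ht x
  have h2 := hlow t ht x
  constructor
  · have hEp : 0 < E t := by linarith [hE1 t ht.2.le]
    have h3 : E t ≤ Real.exp (γ * G) + γ * T * B := by
      have : 0 ≤ γ * B * t := mul_nonneg (by positivity) ht.1.le
      simp only [hE]; linarith
    have h4 := Real.log_le_log hEp h3
    have h5 := mul_le_mul_of_nonneg_left h4 (show 0 ≤ 1/γ by positivity)
    linarith
  · have : 0 ≤ A * t := mul_nonneg hA0 ht.1.le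
    linarith
end
end

section
/- There exists a constant C > 0 depending only on α, γ, μ such that the following holds. Let (u⁰, u¹), with u⁰, u¹ ∈ C^{1,2+α}([0,T]×ℝ), be the unique solution of the PDDE Cauchy problem with data λ⁰, λ¹ ∈ C^α([0,T]×ℝ), g⁰, g¹ ∈ C^{2+α}(ℝ) and parameters γ, μ > 0, and set M₀ = γ·max(‖g⁰‖₀,‖g¹‖₀) + ½T·max(‖λ⁰‖₀,‖λ¹‖₀)² + μT and M_α = γ·max(‖g⁰‖_{2+α},‖g¹‖_{2+α}) + (T+1)·(½·max(‖λ⁰‖_α,‖λ¹‖_α)² + μ). Then, with all norms/seminorms below taken as the maximum over the two slices u⁰, u¹: [u]_α ≤ C·M_α^{2+α/2}·e^{αM₀}, ‖u_x‖₀ ≤ C·M_α^{2+α/2}·e^{M₀}, [u_x]_α ≤ C·M_α^{2+α/2}·e^{(1+α)M₀} and ‖u_x‖_α ≤ C·M_α^{2+α/2}·e^{(1+α)M₀}. -/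
open Set Filter

noncomputable section

/-- `(u0, u1)` (with derivative extensions) solves the PDDE Cauchy problem with data
`(λ⁰, λ¹, g⁰, g¹, γ, μ)`:
`0 = u¹_t + ½u¹_xx − λ¹ u¹_x + (λ¹)²/(2γ)` on `[0,T) × ℝ`, `u¹(T,·) = g¹`, and
`0 = u⁰_t + ½u⁰_xx − λ⁰ u⁰_x + (λ⁰)²/(2γ) − (μ/γ)(e^{−γ(u¹−u⁰)} − 1)` on `[0,T) × ℝ`,
`u⁰(T,·) = g⁰`, both slices being of class `C^{1,2+α}`. -/
def SolvesPDDE (T α γ μ : ℝ) (lam0 lam1 : ℝ → ℝ → ℝ) (g0 g1 : ℝ → ℝ)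
    (u0 u0t u0x u0xx u1 u1t u1x u1xx : ℝ → ℝ → ℝ) : Prop :=
  MemC12a T α u0 u0t u0x u0xx ∧ MemC12a T α u1 u1t u1x u1xx ∧
  (∀ t ∈ Ico (0:ℝ) T, ∀ x : ℝ,
    u1t t x + (1/2) * u1xx t x - lam1 t x * u1x t x + (lam1 t x)^2 / (2*γ) = 0) ∧
  (∀ x : ℝ, u1 T x = g1 x) ∧
  (∀ t ∈ Ico (0:ℝ) T, ∀ x : ℝ,
    u0t t x + (1/2) * u0xx t x - lam0 t x * u0x t x + (lam0 t x)^2 / (2*γ)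
      - (μ/γ) * (Real.exp (-γ * (u1 t x - u0 t x)) - 1) = 0) ∧
  (∀ x : ℝ, u0 T x = g0 x)

lemma time_le {f : ℝ → ℝ} {a t0 T : ℝ} (hT : t0 < T) (h : HasDerivAt f a t0)
    (hm : ∀ t ∈ Icc t0 T, f t ≤ f t0) : a ≤ 0 := by
  have h1 := (hasDerivWithinAt_iff_tendsto_slope' (s := Ioi t0) (by simp)).1 h.hasDerivWithinAt
  refine le_of_tendsto h1 ?_
  filter_upwards [Ioo_mem_nhdsGT hT] with t ht
  rw [slope_def_field]
  exact div_nonpos_of_nonpos_of_nonneg (by linarith [hm t ⟨ht.1.le, ht.2.le⟩]) (by linarith [ht.1])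

lemma second_le {f f1 : ℝ → ℝ} {b s0 : ℝ} (h : ∀ᶠ s in nhds s0, HasDerivAt f (f1 s) s)
    (h2 : HasDerivAt f1 b s0) (hm : IsLocalMax f s0) : b ≤ 0 := by
  by_contra hb
  push Not at hb
  have hd : deriv f =ᶠ[nhds s0] f1 := h.mono fun s hs => hs.deriv
  have h0 : f1 s0 = 0 := hm.hasDerivAt_eq_zero h.self_of_nhds
  have hdd : deriv (deriv f) s0 = b := by
    rw [hd.deriv_eq, h2.deriv]
  have hmin : IsLocalMin f s0 := isLocalMin_of_deriv_deriv_pos (by rw [hdd]; exact hb)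
    (by rw [hd.self_of_nhds, h0]) h.self_of_nhds.continuousAt
  have hconst : f =ᶠ[nhds s0] fun _ => f s0 := by
    filter_upwards [hm, hmin] with s h1 h2 using le_antisymm h1 h2
  have : deriv (deriv f) s0 = 0 := by
    have := hconst.deriv.deriv_eq
    rw [this]; simp
  linarith

lemma deriv_le_of_le {f : ℝ → ℝ} {d K ρ : ℝ} (hρ : 0 < ρ) (h : HasDerivAt f d 0) (h0 : f 0 = 0)
    (hm : ∀ s ∈ Ioo 0 ρ, f s ≤ K * s) : d ≤ K := by
  have h1 := (hasDerivWithinAt_iff_tendsto_slope' (s := Ioi (0:ℝ)) (by simp)).1 h.hasDerivWithinAt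
  refine le_of_tendsto h1 ?_
  filter_upwards [Ioo_mem_nhdsGT hρ] with t ht
  rw [slope_def_field, h0, div_le_iff₀ (by linarith [ht.1])]
  have := hm t ht
  linarith

structure Reg (T : ℝ) (u ut ux uxx : ℝ → ℝ → ℝ) : Prop where
  c : ContinuousOn (fun p : ℝ × ℝ => u p.1 p.2) (Icc (0:ℝ) T ×ˢ (univ : Set ℝ))
  dt : ∀ t ∈ Ioo (0:ℝ) T, ∀ x : ℝ, HasDerivAt (fun s => u s x) (ut t x) t
  dx : ∀ t ∈ Ioo (0:ℝ) T, ∀ x : ℝ, HasDerivAt (fun y => u t y) (ux t x) x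
  dxx : ∀ t ∈ Ioo (0:ℝ) T, ∀ x : ℝ, HasDerivAt (fun y => ux t y) (uxx t x) x

lemma Reg.neg {T : ℝ} {u ut ux uxx : ℝ → ℝ → ℝ} (h : Reg T u ut ux uxx) :
    Reg T (fun t x => -u t x) (fun t x => -ut t x) (fun t x => -ux t x) (fun t x => -uxx t x) :=
  ⟨h.c.neg, fun t ht x => (h.dt t ht x).neg, fun t ht x => (h.dx t ht x).neg,
    fun t ht x => (h.dxx t ht x).neg⟩

lemma Reg.comp {T : ℝ} {u ut ux uxx : ℝ → ℝ → ℝ} (h : Reg T u ut ux uxx) {X : Type*}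
    [TopologicalSpace X] {S : Set X} {a b : X → ℝ} (ha : ContinuousOn a S) (hb : ContinuousOn b S)
    (hS : ∀ p ∈ S, a p ∈ Icc (0:ℝ) T) : ContinuousOn (fun p => u (a p) (b p)) S :=
  h.c.comp (ha.prodMk hb) (fun p hp => ⟨hS p hp, mem_univ _⟩)

/-- maximum principle on the line -/
lemma mp_line {T L W : ℝ} {u ut ux uxx b : ℝ → ℝ → ℝ} (h : Reg T u ut ux uxx)
    (hW : ∀ t ∈ Icc 0 T, ∀ x, u t x ≤ W) (hL : 0 ≤ L)
    (hb : ∀ t ∈ Ioo 0 T, ∀ x, |b t x| ≤ L) (hT : ∀ x, u T x ≤ 0)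
    (hop : ∀ t ∈ Ioo 0 T, ∀ x, 0 < u t x → 0 ≤ ut t x + 1/2 * uxx t x - b t x * ux t x) :
    ∀ t ∈ Ioo 0 T, ∀ x, u t x ≤ 0 := by
  intro t0 ht0 x0
  by_contra hpos
  push Not at hpos
  set K : ℝ := L + 2 with hK
  set p0 : ℝ := (1 + x0^2) * Real.exp (K * (T - t0)) with hp0
  have hp0pos : 0 < p0 := by positivity
  set ε : ℝ := u t0 x0 / (2 * p0) with hε
  have hεpos : 0 < ε := by positivity
  set z : ℝ → ℝ → ℝ := fun t x => u t x - ε * ((1 + x^2) * Real.exp (K * (T - t))) with hz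
  have hz0 : 0 < z t0 x0 := by
    have : ε * p0 = u t0 x0 / 2 := by rw [hε]; field_simp
    simp only [hz]; rw [← hp0, this]; linarith
  set ρ : ℝ := |x0| + 1 + |W| / ε with hρ
  have hρ0 : |x0| < ρ := by
    have : 0 ≤ |W| / ε := by positivity
    linarith
  have hρ1 : |W| < ε * (1 + ρ^2) := by
    have h1 : |W| / ε < 1 + ρ^2 := by
      have : |W|/ε ≤ ρ := by linarith [abs_nonneg x0]
      nlinarith [sq_nonneg (ρ-1)]
    rwa [div_lt_iff₀ hεpos, mul_comm] at h1
  have hzc : ContinuousOn (fun p : ℝ × ℝ => z p.1 p.2) (Icc t0 T ×ˢ Icc (-ρ) ρ) := by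
    apply ContinuousOn.sub
    · exact h.c.mono (prod_mono (Icc_subset_Icc ht0.1.le le_rfl) (subset_univ _))
    · fun_prop
  obtain ⟨⟨t, x⟩, ⟨ht, hx⟩, hmax⟩ := (isCompact_Icc.prod isCompact_Icc).exists_isMaxOn
    ⟨(t0, x0), ⟨⟨le_rfl, ht0.2.le⟩, abs_le.1 hρ0.le⟩⟩ hzc
  simp only at ht hx
  have hmax' : ∀ t' ∈ Icc t0 T, ∀ x' ∈ Icc (-ρ) ρ, z t' x' ≤ z t x :=
    fun t' ht' x' hx' => hmax (show (t', x') ∈ _ from ⟨ht', hx'⟩)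
  have hzpos : 0 < z t x := hz0.trans_le (hmax' t0 ⟨le_rfl, ht0.2.le⟩ x0 (abs_le.1 hρ0.le))
  have hexp1 : 1 ≤ Real.exp (K * (T - t)) := Real.one_le_exp (by nlinarith [ht.2])
  have hpen : ε * (1 + x^2) ≤ ε * ((1 + x^2) * Real.exp (K * (T - t))) := by
    have : 0 < 1 + x^2 := by positivity
    exact mul_le_mul_of_nonneg_left (le_mul_of_one_le_right this.le hexp1) hεpos.le
  have hpen0 : 0 < ε * (1 + x^2) := by positivity
  have hupos : 0 < u t x := by simp only [hz] at hzpos; linarith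
  have htT : t < T := by
    rcases ht.2.lt_or_eq with h1 | h1
    · exact h1
    · rw [h1] at hupos; linarith [hT x]
  have htI : t ∈ Ioo 0 T := ⟨ht0.1.trans_le ht.1, htT⟩
  have hxρ : |x| < ρ := by
    by_contra hc
    push Not at hc
    have : ρ^2 ≤ x^2 := by
      rw [← sq_abs x]; gcongr
    have h3 := hW t ⟨htI.1.le, htI.2.le⟩ x
    have h4 : ε * (1 + ρ^2) ≤ ε * (1 + x^2) := by gcongr
    simp only [hz] at hzpos
    linarith [le_abs_self W]
  have hxI := abs_lt.1 hxρ
  have hlm : IsLocalMax (fun y => z t y) x := by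
    filter_upwards [Ioo_mem_nhds hxI.1 hxI.2] with y hy using hmax' t ht y ⟨hy.1.le, hy.2.le⟩
  set E := Real.exp (K * (T - t)) with hE
  have hdt : HasDerivAt (fun t => z t x) (ut t x - ε * ((1 + x^2) * (E * (K * (-1))))) t := by
    refine (h.dt t htI x).sub (HasDerivAt.const_mul _ (HasDerivAt.const_mul _ ?_))
    exact (((hasDerivAt_id t).const_sub T).const_mul K).exp
  have hdx : ∀ y, HasDerivAt (fun y => z t y) (ux t y - ε * ((2 * y) * E)) y := by
    intro y
    refine (h.dx t htI y).sub (HasDerivAt.const_mul _ (HasDerivAt.mul_const ?_ _))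
    simpa using (hasDerivAt_pow 2 y).const_add 1
  have hdxx : HasDerivAt (fun y => ux t y - ε * ((2 * y) * E)) (uxx t x - ε * (2 * E)) x := by
    refine (h.dxx t htI x).sub (HasDerivAt.const_mul _ (HasDerivAt.mul_const ?_ _))
    simpa using (hasDerivAt_id x).const_mul 2
  have e1 := time_le htT hdt (fun t' ht' => hmax' t' ⟨ht.1.trans ht'.1, ht'.2⟩ x hx)
  have e2 := second_le (Eventually.of_forall hdx) hdxx hlm
  have e3 : ux t x - ε * ((2 * x) * E) = 0 := hlm.hasDerivAt_eq_zero (hdx x)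
  have e4 := hop t htI x hupos
  have e5 := hb t htI x
  have hux : ux t x = ε * ((2 * x) * E) := by linarith
  rw [hux] at e4
  have e6 : -(b t x * (2 * x)) ≤ L * (1 + x^2) := by
    have h1 : |b t x * (2*x)| ≤ L * (1 + x^2) := by
      rw [abs_mul]
      apply mul_le_mul e5 _ (abs_nonneg _) hL
      rw [abs_le]; constructor <;> nlinarith [sq_nonneg (x-1), sq_nonneg (x+1)]
    linarith [neg_abs_le (b t x * (2*x))]
  have hεE : 0 < ε * E := by positivity
  have e7 : 0 ≤ ε * E * (-K * (1 + x^2) + 1 - b t x * (2 * x)) := by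
    linear_combination e1 + 1/2 * e2 + e4
  have e8 : -K * (1 + x^2) + 1 - b t x * (2 * x) < 0 := by
    rw [hK]; nlinarith [sq_nonneg x]
  linarith [mul_neg_of_pos_of_neg hεE e8]

lemma grad_le {T U F G r0 : ℝ} {u ut ux uxx : ℝ → ℝ → ℝ} (h : Reg T u ut ux uxx)
    (hU : ∀ t ∈ Icc 0 T, ∀ x, |u t x| ≤ U) (hF0 : 0 < F)
    (hF : ∀ t ∈ Ioo 0 T, ∀ x, |ut t x + 1/2 * uxx t x| ≤ F) (hr : 0 < r0)
    (hG : ∀ x y, |u T x - u T y| ≤ G * |x - y|) :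
    ∀ t ∈ Ioo 0 T, ∀ x, ux t x ≤ G + U / r0 + 3/2 * F * r0 := by
  intro t0 ht0 x
  have hG0 : 0 ≤ G := by simpa using (abs_nonneg _).trans (hG 1 0)
  have hU0 : 0 ≤ U := (abs_nonneg _).trans (hU t0 ⟨ht0.1.le, ht0.2.le⟩ 0)
  set B := 3 * F with hB
  set A := 2 * G + 2 * U / r0 + B * r0 with hA
  set z : ℝ → ℝ → ℝ := fun t r => u t (x + r) - u t (x - r) - (A * r - B * r^2) with hz
  have key : ∀ r ∈ Icc 0 r0, z t0 r ≤ 0 := by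
    intro r1 hr1
    by_contra hpos
    push Not at hpos
    have hsub : ∀ p : ℝ × ℝ, p ∈ Icc t0 T ×ˢ Icc 0 r0 → p.1 ∈ Icc 0 T :=
      fun p hp => ⟨ht0.1.le.trans hp.1.1, hp.1.2⟩
    have hzc : ContinuousOn (fun p : ℝ × ℝ => z p.1 p.2) (Icc t0 T ×ˢ Icc 0 r0) := by
      apply ContinuousOn.sub
      · apply ContinuousOn.sub
        · exact h.comp (by fun_prop) (by fun_prop) hsub
        · exact h.comp (by fun_prop) (by fun_prop) hsub
      · fun_prop
    obtain ⟨⟨t, r⟩, ⟨ht, hrI⟩, hmax⟩ := (isCompact_Icc.prod isCompact_Icc).exists_isMaxOn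
      ⟨(t0, r1), ⟨⟨le_rfl, ht0.2.le⟩, hr1⟩⟩ hzc
    simp only at ht hrI
    have hmax' : ∀ t' ∈ Icc t0 T, ∀ x' ∈ Icc 0 r0, z t' x' ≤ z t r :=
      fun t' ht' x' hx' => hmax (show (t', x') ∈ _ from ⟨ht', hx'⟩)
    have hzpos : 0 < z t r := hpos.trans_le (hmax' t0 ⟨le_rfl, ht0.2.le⟩ r1 hr1)
    have hAr : ∀ r ∈ Icc 0 r0, (2 * G + 2 * U / r0) * r ≤ A * r - B * r^2 := by
      intro r hr'
      have : 0 ≤ B * r * (r0 - r) :=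
        mul_nonneg (mul_nonneg (by positivity) hr'.1) (by linarith [hr'.2])
      rw [hA]; nlinarith
    have hUr : 0 ≤ 2 * U / r0 := by positivity
    have htT : t < T := by
      rcases ht.2.lt_or_eq with h1 | h1
      · exact h1
      · exfalso
        simp only [hz] at hzpos
        rw [h1] at hzpos
        have h2 := hG (x + r) (x - r)
        rw [show x + r - (x - r) = 2 * r by ring, abs_of_nonneg (by linarith [hrI.1] : 0 ≤ 2 * r)] at h2
        have h3 := hAr r hrI
        have h4 := mul_nonneg hUr hrI.1
        nlinarith [le_abs_self (u T (x+r) - u T (x-r))]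
    have htI : t ∈ Ioo 0 T := ⟨ht0.1.trans_le ht.1, htT⟩
    have hr0 : 0 < r := by
      rcases hrI.1.lt_or_eq with h1 | h1
      · exact h1
      · rw [← h1] at hzpos; simp [hz] at hzpos
    have hrr : r < r0 := by
      rcases hrI.2.lt_or_eq with h1 | h1
      · exact h1
      · exfalso
        have h3 := hAr r hrI
        simp only [hz] at hzpos
        have h5 := abs_le.1 (hU t ⟨htI.1.le, htI.2.le⟩ (x+r))
        have h6 := abs_le.1 (hU t ⟨htI.1.le, htI.2.le⟩ (x-r))
        have h7 : 2 * U / r0 * r = 2 * U := by rw [h1]; field_simp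
        nlinarith [mul_nonneg hG0 hrI.1]
    have hlm : IsLocalMax (fun y => z t y) r := by
      filter_upwards [Ioo_mem_nhds hr0 hrr] with y hy using hmax' t ht y ⟨hy.1.le, hy.2.le⟩
    have hdt : HasDerivAt (fun t => z t r) (ut t (x+r) - ut t (x-r)) t := by
      exact ((h.dt t htI (x+r)).sub (h.dt t htI (x-r))).sub_const _
    have hdx : ∀ y, HasDerivAt (fun y => z t y)
        (ux t (x+y) + ux t (x-y) - (A - B * (2 * y))) y := by
      intro y
      have a1 : HasDerivAt (fun y => u t (x + y)) (ux t (x+y)) y := by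
        simpa using (h.dx t htI (x+y)).comp_const_add x y
      have a2 : HasDerivAt (fun y => u t (x - y)) (-ux t (x-y)) y := by
        simpa using (h.dx t htI (x-y)).comp_const_sub x y
      have a3 : HasDerivAt (fun y => A * y - B * y^2) (A - B * (2 * y)) y := by
        refine HasDerivAt.sub ?_ ?_
        · simpa using (hasDerivAt_id y).const_mul A
        · simpa using (hasDerivAt_pow 2 y).const_mul B
      have := (a1.sub a2).sub a3
      rw [sub_neg_eq_add] at this
      exact this
    have hdxx : HasDerivAt (fun y => ux t (x+y) + ux t (x-y) - (A - B * (2 * y)))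
        (uxx t (x+r) - uxx t (x-r) + 2 * B) r := by
      have a1 : HasDerivAt (fun y => ux t (x + y)) (uxx t (x+r)) r := by
        simpa using (h.dxx t htI (x+r)).comp_const_add x r
      have a2 : HasDerivAt (fun y => ux t (x - y)) (-uxx t (x-r)) r := by
        simpa using (h.dxx t htI (x-r)).comp_const_sub x r
      have a3 : HasDerivAt (fun y => A - B * (2 * y)) (-(B * (2 * 1))) r := by
        exact (((hasDerivAt_id r).const_mul 2).const_mul B).const_sub A
      exact ((a1.add a2).sub a3).congr_deriv (by ring)
    have e1 := time_le htT hdt (fun t' ht' => hmax' t' ⟨ht.1.trans ht'.1, ht'.2⟩ r hrI)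
    have e2 := second_le (Eventually.of_forall hdx) hdxx hlm
    have e3 := abs_le.1 (hF t htI (x+r))
    have e4 := abs_le.1 (hF t htI (x-r))
    linarith
  have hd : HasDerivAt (fun r => u t0 (x + r) - u t0 (x - r)) (2 * ux t0 x) 0 := by
    have a1 : HasDerivAt (fun y => u t0 (x + y)) (ux t0 (x+0)) 0 := by
      simpa using (h.dx t0 ht0 (x+0)).comp_const_add x 0
    have a2 : HasDerivAt (fun y => u t0 (x - y)) (-ux t0 (x-0)) 0 := by
      simpa using (h.dx t0 ht0 (x-0)).comp_const_sub x 0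
    exact (a1.sub a2).congr_deriv (by rw [add_zero, sub_zero]; ring)
  have := deriv_le_of_le (K := A) hr hd (by simp) (by
    intro s hs
    have h1 := key s ⟨hs.1.le, hs.2.le⟩
    simp only [hz] at h1
    nlinarith [sq_nonneg s])
  rw [hA, hB] at this
  have h2 : 2 * U / r0 = 2 * (U / r0) := by ring
  linarith
def V4 (u : ℝ → ℝ → ℝ) (x t r s : ℝ) : ℝ :=
  u t (x + r + s) - u t (x + r - s) - u t (x - r + s) + u t (x - r - s)

def bar (α A B r s : ℝ) : ℝ := A * r * s - B * r ^ (1 + α) * s - B * r * s ^ (1 + α)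

lemma V4_symm (u : ℝ → ℝ → ℝ) (x t r s : ℝ) : V4 u x t r s = V4 u x t s r := by
  unfold V4
  rw [show x + s + r = x + r + s by ring, show x + s - r = x - r + s by ring,
    show x - s + r = x + r - s by ring, show x - s - r = x - r - s by ring]
  ring

lemma bar_symm (α A B r s : ℝ) : bar α A B r s = bar α A B s r := by
  unfold bar; ring

lemma V4_ds {T : ℝ} {u ut ux uxx : ℝ → ℝ → ℝ} (h : Reg T u ut ux uxx) {t : ℝ} (ht : t ∈ Ioo 0 T)
    (x r s : ℝ) : HasDerivAt (fun s => V4 u x t r s)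
      (ux t (x + r + s) + ux t (x + r - s) - ux t (x - r + s) - ux t (x - r - s)) s := by
  have a1 : HasDerivAt (fun y => u t (x + r + y)) (ux t (x+r+s)) s := by
    simpa using (h.dx t ht (x+r+s)).comp_const_add (x+r) s
  have a2 : HasDerivAt (fun y => u t (x + r - y)) (-ux t (x+r-s)) s := by
    simpa using (h.dx t ht (x+r-s)).comp_const_sub (x+r) s
  have a3 : HasDerivAt (fun y => u t (x - r + y)) (ux t (x-r+s)) s := by
    simpa using (h.dx t ht (x-r+s)).comp_const_add (x-r) s
  have a4 : HasDerivAt (fun y => u t (x - r - y)) (-ux t (x-r-s)) s := by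
    simpa using (h.dx t ht (x-r-s)).comp_const_sub (x-r) s
  exact (((a1.sub a2).sub a3).add a4).congr_deriv (by ring)

lemma V4_dss {T : ℝ} {u ut ux uxx : ℝ → ℝ → ℝ} (h : Reg T u ut ux uxx) {t : ℝ} (ht : t ∈ Ioo 0 T)
    (x r s : ℝ) : HasDerivAt (fun s => ux t (x + r + s) + ux t (x + r - s)
        - ux t (x - r + s) - ux t (x - r - s))
      (V4 uxx x t r s) s := by
  have a1 : HasDerivAt (fun y => ux t (x + r + y)) (uxx t (x+r+s)) s := by
    simpa using (h.dxx t ht (x+r+s)).comp_const_add (x+r) s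
  have a2 : HasDerivAt (fun y => ux t (x + r - y)) (-uxx t (x+r-s)) s := by
    simpa using (h.dxx t ht (x+r-s)).comp_const_sub (x+r) s
  have a3 : HasDerivAt (fun y => ux t (x - r + y)) (uxx t (x-r+s)) s := by
    simpa using (h.dxx t ht (x-r+s)).comp_const_add (x-r) s
  have a4 : HasDerivAt (fun y => ux t (x - r - y)) (-uxx t (x-r-s)) s := by
    simpa using (h.dxx t ht (x-r-s)).comp_const_sub (x-r) s
  exact (((a1.add a2).sub a3).sub a4).congr_deriv (by unfold V4; ring)

lemma V4_dt {T : ℝ} {u ut ux uxx : ℝ → ℝ → ℝ} (h : Reg T u ut ux uxx) {t : ℝ} (ht : t ∈ Ioo 0 T)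
    (x r s : ℝ) : HasDerivAt (fun t => V4 u x t r s) (V4 ut x t r s) t :=
  (((h.dt t ht _).sub (h.dt t ht _)).sub (h.dt t ht _)).add (h.dt t ht _)

lemma hess_aux {T α A H : ℝ} {u ut ux uxx : ℝ → ℝ → ℝ} (h : Reg T u ut ux uxx)
    (hα : 0 < α) (hα1 : α ≤ 1) (hH0 : 0 < H)
    (hH : ∀ t ∈ Ioo 0 T, ∀ x y,
      |(ut t x + 1/2 * uxx t x) - (ut t y + 1/2 * uxx t y)| ≤ H * |x - y| ^ α)
    {x t r s : ℝ} (ht : t ∈ Ioo 0 T) (hs : 0 < s) (hsr : s ≤ r)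
    (h1 : ∀ t' ∈ Icc t T, V4 u x t' r s - bar α A (16 * H / α) r s ≤
      V4 u x t r s - bar α A (16 * H / α) r s)
    (h2 : IsLocalMax (fun s => V4 u x t r s - bar α A (16 * H / α) r s) s) : False := by
  set B := 16 * H / α with hB
  have hB0 : 0 < B := by positivity
  have e1 := time_le ht.2 ((V4_dt h ht x r s).sub_const _) h1
  have hd : ∀ᶠ y in nhds s, HasDerivAt (fun s => V4 u x t r s - bar α A B r s)
      ((ux t (x + r + y) + ux t (x + r - y) - ux t (x - r + y) - ux t (x - r - y)) -
        (A * r - B * r ^ (1 + α) - B * r * ((1 + α) * y ^ α))) y := by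
    filter_upwards [lt_mem_nhds hs] with y hy
    refine (V4_ds h ht x r y).sub ?_
    refine HasDerivAt.sub (HasDerivAt.sub ?_ ?_) (HasDerivAt.const_mul _ ?_)
    · simpa using (hasDerivAt_id y).const_mul (A * r)
    · simpa using (hasDerivAt_id y).const_mul (B * r ^ (1+α))
    · simpa using Real.hasDerivAt_rpow_const (x := y) (p := 1 + α) (Or.inl hy.ne')
  have hdd : HasDerivAt (fun y => (ux t (x + r + y) + ux t (x + r - y) - ux t (x - r + y)
        - ux t (x - r - y)) - (A * r - B * r ^ (1 + α) - B * r * ((1 + α) * y ^ α)))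
      (V4 uxx x t r s - (-(B * r * ((1 + α) * (α * s ^ (α - 1)))))) s := by
    refine (V4_dss h ht x r s).sub ?_
    refine HasDerivAt.const_sub _ (HasDerivAt.const_mul _ (HasDerivAt.const_mul _ ?_))
    exact Real.hasDerivAt_rpow_const (Or.inl hs.ne')
  have e2 := second_le hd hdd h2
  have p1 := (abs_le.1 (hH t ht (x + r + s) (x + r - s))).1
  have p2 := (abs_le.1 (hH t ht (x - r + s) (x - r - s))).2
  rw [show x + r + s - (x + r - s) = 2 * s by ring, abs_of_pos (by linarith : 0 < 2 * s)] at p1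
  rw [show x - r + s - (x - r - s) = 2 * s by ring, abs_of_pos (by linarith : 0 < 2 * s)] at p2
  have hp : (2 * s) ^ α ≤ 2 * s ^ α := by
    rw [Real.mul_rpow (by norm_num) hs.le]
    have : (2:ℝ) ^ α ≤ 2 ^ (1:ℝ) := Real.rpow_le_rpow_of_exponent_le (by norm_num) hα1
    rw [Real.rpow_one] at this
    have h0 : 0 < s ^ α := Real.rpow_pos_of_pos hs _
    gcongr
  have hsa : 0 < s ^ α := Real.rpow_pos_of_pos hs _
  have hq : s ^ α ≤ r * s ^ (α - 1) := by
    rw [Real.rpow_sub_one hs.ne', mul_div_assoc', le_div_iff₀ hs]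
    nlinarith
  have hBq : 16 * H * s ^ α ≤ B * r * ((1 + α) * (α * s ^ (α - 1))) := by
    have : B * r * ((1 + α) * (α * s ^ (α - 1))) = (B * α) * ((1 + α) * (r * s ^ (α - 1))) := by ring
    rw [this, show B * α = 16 * H by rw [hB]; field_simp]
    have : s ^ α ≤ (1 + α) * (r * s ^ (α - 1)) := by nlinarith
    gcongr
  have hHp : H * (2 * s) ^ α ≤ H * (2 * s ^ α) := by gcongr
  have hHs : 0 < H * s ^ α := by positivity
  unfold V4 at e1 e2
  linarith

lemma bar_cont {α : ℝ} (hα : 0 < α) (A B : ℝ) :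
    Continuous (fun p : ℝ × ℝ × ℝ => bar α A B p.2.1 p.2.2) := by
  unfold bar
  have h1 : Continuous (fun p : ℝ × ℝ × ℝ => p.2.1 ^ (1+α)) :=
    Continuous.rpow_const (by fun_prop) (fun _ => Or.inr (by linarith))
  have h2 : Continuous (fun p : ℝ × ℝ × ℝ => p.2.2 ^ (1+α)) :=
    Continuous.rpow_const (by fun_prop) (fun _ => Or.inr (by linarith))
  fun_prop

lemma bar_ge {α A' B r0 r s : ℝ} (hα : 0 < α) (hB : 0 ≤ B) (hr : 0 ≤ r) (hs : 0 ≤ s)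
    (hr0 : r ≤ r0) (hs0 : s ≤ r0) :
    A' * r * s ≤ bar α (A' + 2 * B * r0 ^ α) B r s := by
  unfold bar
  have a1 : r ^ (1 + α) = r * r ^ α := by
    rw [Real.rpow_add_of_nonneg hr (by norm_num) hα.le, Real.rpow_one]
  have a2 : s ^ (1 + α) = s * s ^ α := by
    rw [Real.rpow_add_of_nonneg hs (by norm_num) hα.le, Real.rpow_one]
  have b1 : r ^ α ≤ r0 ^ α := by gcongr
  have b2 : s ^ α ≤ r0 ^ α := by gcongr
  rw [a1, a2]
  have : 0 ≤ B * r * s * (2 * r0 ^ α - r ^ α - s ^ α) :=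
    mul_nonneg (by positivity) (by linarith)
  nlinarith

lemma bar_le {α A B r s : ℝ} (hB : 0 ≤ B) (hr : 0 ≤ r) (hs : 0 ≤ s) :
    bar α A B r s ≤ A * r * s := by
  unfold bar
  have : 0 ≤ B * r ^ (1+α) * s := by positivity
  have : 0 ≤ B * r * s ^ (1+α) := by positivity
  linarith

lemma lip_of_deriv {f f' : ℝ → ℝ} {P : ℝ} (h : ∀ x, HasDerivAt f (f' x) x) (hP : ∀ x, |f' x| ≤ P)
    (x y : ℝ) : |f x - f y| ≤ P * |x - y| := by
  have := Convex.norm_image_sub_le_of_norm_hasDerivWithin_le (f := f) (f' := f') (s := univ) (C := P)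
    (fun x _ => (h x).hasDerivWithinAt) (fun x _ => hP x) convex_univ (mem_univ y) (mem_univ x)
  simpa using this

lemma hess_le {T α P H G r0 : ℝ} {u ut ux uxx : ℝ → ℝ → ℝ} (h : Reg T u ut ux uxx)
    (hα : 0 < α) (hα1 : α ≤ 1) (hH0 : 0 < H) (hP0 : 0 ≤ P) (hG0 : 0 ≤ G)
    (hP : ∀ t ∈ Ioo 0 T, ∀ x, |ux t x| ≤ P)
    (hH : ∀ t ∈ Ioo 0 T, ∀ x y,
      |(ut t x + 1/2 * uxx t x) - (ut t y + 1/2 * uxx t y)| ≤ H * |x - y| ^ α) (hr : 0 < r0)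
    (hG : ∀ x r s, 0 ≤ r → 0 ≤ s → V4 u x T r s ≤ 4 * G * r * s) :
    ∀ t ∈ Ioo 0 T, ∀ x, uxx t x ≤ G + P / r0 + 8 / α * H * r0 ^ α := by
  intro t0 ht0 x
  set B := 16 * H / α with hB
  have hB0 : 0 < B := by positivity
  set A' := 4 * G + 4 * P / r0 with hA'
  set A := A' + 2 * B * r0 ^ α with hA
  set z : ℝ → ℝ → ℝ → ℝ := fun t r s => V4 u x t r s - bar α A B r s with hz
  have hPr : 0 ≤ 4 * P / r0 := by positivity
  have key : ∀ r ∈ Icc 0 r0, ∀ s ∈ Icc 0 r0, z t0 r s ≤ 0 := by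
    intro r1 hr1 s1 hs1
    by_contra hpos
    push Not at hpos
    have hsub : ∀ p : ℝ × ℝ × ℝ, p ∈ Icc t0 T ×ˢ Icc 0 r0 ×ˢ Icc 0 r0 → p.1 ∈ Icc 0 T :=
      fun p hp => ⟨ht0.1.le.trans hp.1.1, hp.1.2⟩
    have hzc : ContinuousOn (fun p : ℝ × ℝ × ℝ => z p.1 p.2.1 p.2.2)
        (Icc t0 T ×ˢ Icc 0 r0 ×ˢ Icc 0 r0) := by
      apply ContinuousOn.sub
      · unfold V4
        refine ((ContinuousOn.sub ?_ ?_).sub ?_).add ?_ <;>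
          exact h.comp (by fun_prop) (by fun_prop) hsub
      · exact (bar_cont hα A B).continuousOn
    obtain ⟨⟨t, r, s⟩, ⟨ht, hrI, hsI⟩, hmax⟩ :=
      (isCompact_Icc.prod (isCompact_Icc.prod isCompact_Icc)).exists_isMaxOn
      ⟨(t0, r1, s1), ⟨⟨le_rfl, ht0.2.le⟩, hr1, hs1⟩⟩ hzc
    simp only at ht hrI hsI
    have hmax' : ∀ t' ∈ Icc t0 T, ∀ r' ∈ Icc 0 r0, ∀ s' ∈ Icc 0 r0, z t' r' s' ≤ z t r s :=
      fun t' ht' r' hr' s' hs' => hmax (show (t', r', s') ∈ _ from ⟨ht', hr', hs'⟩)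
    have hzpos : 0 < z t r s := hpos.trans_le (hmax' t0 ⟨le_rfl, ht0.2.le⟩ r1 hr1 s1 hs1)
    have hge : A' * r * s ≤ bar α A B r s := bar_ge hα hB0.le hrI.1 hsI.1 hrI.2 hsI.2
    have hrs : 0 ≤ r * s := mul_nonneg hrI.1 hsI.1
    have htT : t < T := by
      rcases ht.2.lt_or_eq with h1 | h1
      · exact h1
      · exfalso
        simp only [hz] at hzpos
        rw [h1] at hzpos
        have h2 := hG x r s hrI.1 hsI.1
        have h4 := mul_nonneg hPr hrs
        rw [hA'] at hge
        linarith
    have htI : t ∈ Ioo 0 T := ⟨ht0.1.trans_le ht.1, htT⟩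
    have hVs : ∀ r s, 0 ≤ r → 0 ≤ s → V4 u x t r s ≤ 4 * P * s := by
      intro r s hr hs
      have q1 := (abs_le.1 (lip_of_deriv (h.dx t htI) (hP t htI) (x+r+s) (x+r-s))).2
      have q2 := (abs_le.1 (lip_of_deriv (h.dx t htI) (hP t htI) (x-r+s) (x-r-s))).1
      rw [show x + r + s - (x + r - s) = 2 * s by ring, abs_of_nonneg (by linarith : 0 ≤ 2 * s)] at q1
      rw [show x - r + s - (x - r - s) = 2 * s by ring, abs_of_nonneg (by linarith : 0 ≤ 2 * s)] at q2
      unfold V4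
      linarith
    have hVr : V4 u x t r s ≤ 4 * P * r := by
      rw [V4_symm]; exact hVs s r hsI.1 hrI.1
    have hVs := hVs r s hrI.1 hsI.1
    have hs0 : 0 < s := by
      rcases hsI.1.lt_or_eq with h1 | h1
      · exact h1
      · exfalso
        simp only [hz] at hzpos
        rw [← h1] at hzpos hge hVs
        linarith
    have hr0 : 0 < r := by
      rcases hrI.1.lt_or_eq with h1 | h1
      · exact h1
      · exfalso
        simp only [hz] at hzpos
        rw [← h1] at hzpos hge hVr
        linarith
    have hrr : r < r0 := by
      rcases hrI.2.lt_or_eq with h1 | h1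
      · exact h1
      · exfalso
        simp only [hz] at hzpos
        have h7 : 4 * P / r0 * r = 4 * P := by rw [h1]; field_simp
        have h8 : A' * r * s = 4 * G * (r * s) + (4 * P / r0 * r) * s := by rw [hA']; ring
        rw [h8, h7] at hge
        linarith [mul_nonneg (by linarith : 0 ≤ 4 * G) hrs]
    have hss : s < r0 := by
      rcases hsI.2.lt_or_eq with h1 | h1
      · exact h1
      · exfalso
        simp only [hz] at hzpos
        have h7 : 4 * P / r0 * s = 4 * P := by rw [h1]; field_simp
        have h8 : A' * r * s = 4 * G * (r * s) + (4 * P / r0 * s) * r := by rw [hA']; ring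
        rw [h8, h7] at hge
        linarith [mul_nonneg (by linarith : 0 ≤ 4 * G) hrs]
    rcases le_total s r with hsr | hsr
    · refine hess_aux (A := A) (x := x) h hα hα1 hH0 hH htI hs0 hsr ?_ ?_
      · exact fun t' ht' => hmax' t' ⟨ht.1.trans ht'.1, ht'.2⟩ r hrI s hsI
      · filter_upwards [Ioo_mem_nhds hs0 hss] with y hy using
          hmax' t ht r hrI y ⟨hy.1.le, hy.2.le⟩
    · refine hess_aux (A := A) (x := x) h hα hα1 hH0 hH htI hr0 hsr ?_ ?_
      · intro t' ht'
        have := hmax' t' ⟨ht.1.trans ht'.1, ht'.2⟩ r hrI s hsI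
        simp only [hz] at this
        rwa [V4_symm _ _ _ s r, V4_symm _ _ _ s r, bar_symm _ _ _ s r]
      · filter_upwards [Ioo_mem_nhds hr0 hrr] with y hy
        have := hmax' t ht y ⟨hy.1.le, hy.2.le⟩ s hsI
        simp only [hz] at this
        rwa [V4_symm _ _ _ s r, V4_symm _ _ _ s y, bar_symm _ _ _ s r, bar_symm _ _ _ s y]
  have step1 : ∀ r ∈ Ioo 0 r0, 2 * (ux t0 (x + r) - ux t0 (x - r)) ≤ A * r := by
    intro r hrI
    have hd := V4_ds h ht0 x r 0
    have hd' : HasDerivAt (fun s => V4 u x t0 r s) (2 * (ux t0 (x + r) - ux t0 (x - r))) 0 :=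
      hd.congr_deriv (by simp only [add_zero, sub_zero]; ring)
    refine deriv_le_of_le hr hd' (by simp [V4]) ?_
    intro s hs
    have h1 := key r ⟨hrI.1.le, hrI.2.le⟩ s ⟨hs.1.le, hs.2.le⟩
    have h2 := bar_le (α := α) (A := A) hB0.le hrI.1.le hs.1.le
    simp only [hz] at h1
    linarith
  have hd : HasDerivAt (fun r => 2 * (ux t0 (x + r) - ux t0 (x - r))) (4 * uxx t0 x) 0 := by
    have a1 : HasDerivAt (fun y => ux t0 (x + y)) (uxx t0 (x+0)) 0 := by
      simpa using (h.dxx t0 ht0 (x+0)).comp_const_add x 0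
    have a2 : HasDerivAt (fun y => ux t0 (x - y)) (-uxx t0 (x-0)) 0 := by
      simpa using (h.dxx t0 ht0 (x-0)).comp_const_sub x 0
    exact ((a1.sub a2).const_mul 2).congr_deriv (by rw [add_zero, sub_zero]; ring)
  have := deriv_le_of_le (K := A) hr hd (by simp) step1
  rw [hA, hA', hB] at this
  have h2 : 4 * P / r0 = 4 * (P / r0) := by ring
  have h3 : 2 * (16 * H / α) * r0 ^ α = 4 * (8 / α * H * r0 ^ α) := by ring
  linarith
lemma V4_neg (u : ℝ → ℝ → ℝ) (x t r s : ℝ) :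
    V4 (fun t x => -u t x) x t r s = -V4 u x t r s := by
  unfold V4; ring

lemma V4_term {u : ℝ → ℝ → ℝ} {T G : ℝ} {g1 g2 : ℝ → ℝ} (h1 : ∀ y, HasDerivAt (u T) (g1 y) y)
    (h2 : ∀ y, HasDerivAt g1 (g2 y) y) (hG : ∀ y, |g2 y| ≤ G) (x r s : ℝ) (hr : 0 ≤ r)
    (hs : 0 ≤ s) : |V4 u x T r s| ≤ 4 * G * r * s := by
  have hd : ∀ y, HasDerivAt (fun y => u T (y + s) - u T (y - s)) (g1 (y + s) - g1 (y - s)) y := by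
    intro y
    exact HasDerivAt.sub (HasDerivAt.comp_add_const y s (h1 (y+s)))
      (HasDerivAt.comp_sub_const y s (h1 (y-s)))
  have hb : ∀ y, |g1 (y + s) - g1 (y - s)| ≤ G * (2 * s) := by
    intro y
    have := lip_of_deriv h2 hG (y+s) (y-s)
    rwa [show y + s - (y - s) = 2 * s by ring, abs_of_nonneg (by linarith : 0 ≤ 2 * s)] at this
  have := lip_of_deriv hd hb (x+r) (x-r)
  rw [show x + r - (x - r) = 2 * r by ring, abs_of_nonneg (by linarith : 0 ≤ 2 * r)] at this
  have e : V4 u x T r s = (u T (x + r + s) - u T (x + r - s)) -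
    (u T (x - r + s) - u T (x - r - s)) := by unfold V4; ring
  rw [e]
  calc _ ≤ _ := this
    _ = _ := by ring

lemma grad_abs {T U F G r0 : ℝ} {u ut ux uxx : ℝ → ℝ → ℝ} (h : Reg T u ut ux uxx)
    (hU : ∀ t ∈ Icc 0 T, ∀ x, |u t x| ≤ U) (hF0 : 0 < F)
    (hF : ∀ t ∈ Ioo 0 T, ∀ x, |ut t x + 1/2 * uxx t x| ≤ F) (hr : 0 < r0)
    (hG : ∀ x y, |u T x - u T y| ≤ G * |x - y|) :
    ∀ t ∈ Ioo 0 T, ∀ x, |ux t x| ≤ G + U / r0 + 3/2 * F * r0 := by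
  intro t ht x
  rw [abs_le']
  refine ⟨grad_le h hU hF0 hF hr hG t ht x, grad_le h.neg ?_ hF0 ?_ hr ?_ t ht x⟩
  · intro t ht x; rw [abs_neg]; exact hU t ht x
  · intro t ht x; rw [← abs_neg]; convert hF t ht x using 2; ring
  · intro x y; rw [← abs_neg]; convert hG x y using 2; ring

lemma hess_abs {T α P H G r0 : ℝ} {u ut ux uxx : ℝ → ℝ → ℝ} (h : Reg T u ut ux uxx)
    (hα : 0 < α) (hα1 : α ≤ 1) (hH0 : 0 < H) (hP0 : 0 ≤ P) (hG0 : 0 ≤ G)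
    (hP : ∀ t ∈ Ioo 0 T, ∀ x, |ux t x| ≤ P)
    (hH : ∀ t ∈ Ioo 0 T, ∀ x y,
      |(ut t x + 1/2 * uxx t x) - (ut t y + 1/2 * uxx t y)| ≤ H * |x - y| ^ α) (hr : 0 < r0)
    (hG : ∀ x r s, 0 ≤ r → 0 ≤ s → |V4 u x T r s| ≤ 4 * G * r * s) :
    ∀ t ∈ Ioo 0 T, ∀ x, |uxx t x| ≤ G + P / r0 + 8 / α * H * r0 ^ α := by
  intro t ht x
  rw [abs_le']
  refine ⟨hess_le h hα hα1 hH0 hP0 hG0 hP hH hr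
      (fun x r s hr hs => (abs_le'.1 (hG x r s hr hs)).1) t ht x,
    hess_le h.neg hα hα1 hH0 hP0 hG0 ?_ ?_ hr ?_ t ht x⟩
  · intro t ht x; rw [abs_neg]; exact hP t ht x
  · intro t ht x y; rw [← abs_neg]; convert hH t ht x y using 2; ring
  · intro x r s hr hs; rw [V4_neg]; exact (abs_le'.1 (hG x r s hr hs)).2

lemma absorb {T c : ℝ} {w : ℝ → ℝ → ℝ} (hc : 0 ≤ c)
    (hb : ∃ M, ∀ t ∈ Ioo 0 T, ∀ x, |w t x| ≤ M)
    (h : ∀ P, 0 ≤ P → (∀ t ∈ Ioo 0 T, ∀ x, |w t x| ≤ P) →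
      ∀ t ∈ Ioo 0 T, ∀ x, |w t x| ≤ c + P / 2) :
    ∀ t ∈ Ioo 0 T, ∀ x, |w t x| ≤ 2 * c := by
  set S : Set ℝ := {P | 0 ≤ P ∧ ∀ t ∈ Ioo 0 T, ∀ x, |w t x| ≤ P} with hS
  have hne : S.Nonempty := by
    obtain ⟨M, hM⟩ := hb
    exact ⟨max M 0, le_max_right _ _, fun t ht x => (hM t ht x).trans (le_max_left _ _)⟩
  have hbd : BddBelow S := ⟨0, fun P hP => hP.1⟩
  have h0 : 0 ≤ sInf S := le_csInf hne fun P hP => hP.1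
  have h1 : ∀ t ∈ Ioo 0 T, ∀ x, |w t x| ≤ sInf S :=
    fun t ht x => le_csInf hne fun P hP => hP.2 t ht x
  have h2 : sInf S ≤ c + sInf S / 2 := csInf_le hbd ⟨by linarith, h _ h0 h1⟩
  intro t ht x
  linarith [h1 t ht x]

lemma interp {D K d R α : ℝ} (hα : 0 < α) (hα1 : α ≤ 1) (hd : 0 ≤ d) (hR : 0 < R) (hK : 0 ≤ K)
    (h1 : D ≤ K) (h2 : D ≤ K * (d / R)) : D ≤ K * (d / R) ^ α := by
  have hq : 0 ≤ d / R := by positivity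
  rcases le_total (d / R) 1 with h | h
  · refine h2.trans (mul_le_mul_of_nonneg_left ?_ hK)
    exact Real.self_le_rpow_of_le_one hq h hα1
  · refine h1.trans (le_mul_of_one_le_right hK (Real.one_le_rpow h hα.le))

lemma slice_grad {T L U F0 G R : ℝ} {u ut ux uxx : ℝ → ℝ → ℝ} (h : Reg T u ut ux uxx)
    (hU : ∀ t ∈ Icc 0 T, ∀ x, |u t x| ≤ U) (hF0 : 0 < F0) (hL : 0 ≤ L) (hU0 : 0 ≤ U)
    (hb : ∃ M, ∀ t ∈ Ioo 0 T, ∀ x, |ux t x| ≤ M)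
    (hF : ∀ t ∈ Ioo 0 T, ∀ x, |ut t x + 1/2 * uxx t x| ≤ L * |ux t x| + F0) (hr : 0 < R)
    (hLR : 3 * L * R ≤ 1)
    (hG : ∀ x y, |u T x - u T y| ≤ G * |x - y|) :
    ∀ t ∈ Ioo 0 T, ∀ x, |ux t x| ≤ 2 * (G + U / R + 3/2 * F0 * R) := by
  have hG0 : 0 ≤ G := by simpa using (abs_nonneg _).trans (hG 1 0)
  refine absorb (by positivity) hb ?_
  intro P hP0 hP t ht x
  have := grad_abs (F := L * P + F0) h hU (by positivity) (fun t ht x =>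
    (hF t ht x).trans (by gcongr; exact hP t ht x)) hr hG t ht x
  have h2 := mul_le_mul_of_nonneg_right hLR hP0
  nlinarith

lemma slice_hess {T α L P H1 G R : ℝ} {u ut ux uxx : ℝ → ℝ → ℝ} (h : Reg T u ut ux uxx)
    (hα : 0 < α) (hα1 : α ≤ 1) (hH0 : 0 < H1) (hP0 : 0 ≤ P) (hG0 : 0 ≤ G) (hL : 0 ≤ L)
    (hP : ∀ t ∈ Ioo 0 T, ∀ x, |ux t x| ≤ P) (hr : 0 < R)
    (hb : ∃ M, ∀ t ∈ Ioo 0 T, ∀ x, |uxx t x| ≤ M)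
    (hH : ∀ t ∈ Ioo 0 T, ∀ x y,
      |(ut t x + 1/2 * uxx t x) - (ut t y + 1/2 * uxx t y)| ≤
        L * |ux t x - ux t y| + H1 * (|x - y| / R) ^ α)
    (hLR : 16 / α * L * R ≤ 1)
    (hG : ∀ x r s, 0 ≤ r → 0 ≤ s → |V4 u x T r s| ≤ 4 * G * r * s) :
    ∀ t ∈ Ioo 0 T, ∀ x, |uxx t x| ≤ 2 * (G + P / R + 8 / α * (2 * L * P + H1)) := by
  refine absorb (by positivity) hb ?_
  intro S hS0 hS t ht x
  have hRa : 0 < R ^ α := Real.rpow_pos_of_pos hr _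
  have := hess_abs (H := (L * (2 * P + S * R) + H1) / R ^ α) (r0 := R) h hα hα1 (by positivity)
    hP0 hG0 hP ?_ hr hG t ht x
  · have e : 8 / α * ((L * (2 * P + S * R) + H1) / R ^ α) * R ^ α =
      8 / α * (2 * L * P + H1) + (16 / α * L * R) * S / 2 := by field_simp; ring
    rw [e] at this
    have := mul_le_mul_of_nonneg_right hLR hS0
    linarith
  · intro t ht x y
    refine (hH t ht x y).trans ?_
    have e : (L * (2 * P + S * R) + H1) / R ^ α * |x - y| ^ α =
        L * ((2 * P + S * R) * (|x - y| / R) ^ α) + H1 * (|x - y| / R) ^ α := by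
      rw [Real.div_rpow (abs_nonneg _) hr.le]; field_simp
    rw [e]
    gcongr
    refine interp hα hα1 (abs_nonneg _) hr (by positivity) ?_ ?_
    · have a1 := hP t ht x
      have a2 := hP t ht y
      have := abs_sub (ux t x) (ux t y)
      nlinarith [mul_nonneg hS0 hr.le]
    · have := lip_of_deriv (h.dxx t ht) (hS t ht) x y
      have e2 : (2 * P + S * R) * (|x - y| / R) = 2 * P * (|x-y|/R) + S * |x - y| := by field_simp
      rw [e2]
      have : 0 ≤ 2 * P * (|x-y|/R) := by positivity
      linarith

lemma lip_time {T : ℝ} {u ut ux uxx : ℝ → ℝ → ℝ} (h : Reg T u ut ux uxx) {C : ℝ}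
    (hC : ∀ t ∈ Ioo 0 T, ∀ x, |ut t x| ≤ C) {t₁ t₂ : ℝ} (h1 : t₁ ∈ Ioo 0 T) (h2 : t₂ ∈ Ioo 0 T)
    (x : ℝ) : |u t₁ x - u t₂ x| ≤ C * |t₁ - t₂| := by
  have := Convex.norm_image_sub_le_of_norm_hasDerivWithin_le (f := fun t => u t x)
    (f' := fun t => ut t x) (s := Ioo 0 T) (C := C)
    (fun t ht => (h.dt t ht x).hasDerivWithinAt) (fun t ht => hC t ht x) (convex_Ioo 0 T) h2 h1
  simpa using this

lemma scale_u {T α K R : ℝ} {u ut ux uxx : ℝ → ℝ → ℝ} (h : Reg T u ut ux uxx)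
    (hα : 0 < α) (hα1 : α ≤ 1) (hK : 0 ≤ K) (hR : 0 < R)
    (hu : ∀ t ∈ Ioo 0 T, ∀ x, |u t x| ≤ K) (hux : ∀ t ∈ Ioo 0 T, ∀ x, |ux t x| ≤ K / R)
    (hut : ∀ t ∈ Ioo 0 T, ∀ x, |ut t x| ≤ K / R ^ 2) {t₁ t₂ x₁ x₂ : ℝ}
    (h1 : t₁ ∈ Ioo 0 T) (h2 : t₂ ∈ Ioo 0 T) :
    |u t₁ x₁ - u t₂ x₂| ≤ 4 * K * (pd t₁ x₁ t₂ x₂ / R) ^ α := by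
  have hs0 : 0 ≤ Real.sqrt |t₁ - t₂| := Real.sqrt_nonneg _
  have b1 : ∀ t ∈ Ioo 0 T, ∀ s ∈ Ioo 0 T, ∀ x y, |u t x - u s y| ≤ 2 * K := by
    intro t ht s hs x y
    have := abs_sub (u t x) (u s y)
    linarith [hu t ht x, hu s hs y]
  have a1 : |u t₁ x₁ - u t₁ x₂| ≤ 2 * K * (|x₁ - x₂| / R) ^ α := by
    refine interp hα hα1 (abs_nonneg _) hR (by positivity) (b1 _ h1 _ h1 _ _) ?_
    have := lip_of_deriv (h.dx t₁ h1) (hux t₁ h1) x₁ x₂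
    have e : K / R * |x₁ - x₂| = K * (|x₁ - x₂| / R) := by ring
    rw [e] at this
    have : 0 ≤ K * (|x₁ - x₂| / R) := by positivity
    linarith
  have a2 : |u t₁ x₂ - u t₂ x₂| ≤ 2 * K * (Real.sqrt |t₁ - t₂| / R) ^ α := by
    refine interp hα hα1 hs0 hR (by positivity) (b1 _ h1 _ h2 _ _) ?_
    have := lip_time h hut h1 h2 x₂
    have e : K / R ^ 2 * |t₁ - t₂| = K * (Real.sqrt |t₁ - t₂| / R) ^ 2 := by
      rw [div_pow, Real.sq_sqrt (abs_nonneg _)]; ring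
    rw [e] at this
    have b2 := b1 _ h1 _ h2 x₂ x₂
    set q := Real.sqrt |t₁ - t₂| / R
    have hq : 0 ≤ q := by positivity
    rcases le_total q 1 with hq1 | hq1
    · nlinarith [mul_nonneg hK hq, mul_nonneg (mul_nonneg hK hq) (sub_nonneg.2 hq1)]
    · nlinarith [mul_nonneg hK (sub_nonneg.2 hq1)]
  have c1 : (|x₁ - x₂| / R) ^ α ≤ (pd t₁ x₁ t₂ x₂ / R) ^ α := by
    unfold pd; gcongr; linarith
  have c2 : (Real.sqrt |t₁ - t₂| / R) ^ α ≤ (pd t₁ x₁ t₂ x₂ / R) ^ α := by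
    unfold pd; gcongr; linarith [abs_nonneg (x₁ - x₂)]
  have := abs_sub_le (u t₁ x₁) (u t₁ x₂) (u t₂ x₂)
  have d1 := mul_le_mul_of_nonneg_left c1 (by positivity : 0 ≤ 2 * K)
  have d2 := mul_le_mul_of_nonneg_left c2 (by positivity : 0 ≤ 2 * K)
  linarith

lemma slope_approx {T S : ℝ} {u ut ux uxx : ℝ → ℝ → ℝ} (h : Reg T u ut ux uxx)
    (hS : ∀ t ∈ Ioo 0 T, ∀ x, |uxx t x| ≤ S) {t x η : ℝ} (ht : t ∈ Ioo 0 T) (hη : 0 < η) :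
    |ux t x - (u t (x + η) - u t x) / η| ≤ S * η := by
  have hS0 : 0 ≤ S := (abs_nonneg _).trans (hS t ht x)
  obtain ⟨c, hc, hce⟩ := exists_hasDerivAt_eq_slope (fun y => u t y) (fun y => ux t y)
    (by linarith : x < x + η) (fun y _ => (h.dx t ht y).continuousAt.continuousWithinAt)
    (fun y _ => h.dx t ht y)
  rw [add_sub_cancel_left] at hce
  rw [← hce]
  refine (lip_of_deriv (h.dxx t ht) (hS t ht) x c).trans ?_
  gcongr
  rw [abs_le]; constructor <;> linarith [hc.1, hc.2]

lemma scale_ux {T α K R : ℝ} {u ut ux uxx : ℝ → ℝ → ℝ} (h : Reg T u ut ux uxx)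
    (hα : 0 < α) (hα1 : α ≤ 1) (hK : 0 ≤ K) (hR : 0 < R)
    (hux : ∀ t ∈ Ioo 0 T, ∀ x, |ux t x| ≤ K / R)
    (huxx : ∀ t ∈ Ioo 0 T, ∀ x, |uxx t x| ≤ K / R ^ 2)
    (hut : ∀ t ∈ Ioo 0 T, ∀ x, |ut t x| ≤ K / R ^ 2) {t₁ t₂ x₁ x₂ : ℝ}
    (h1 : t₁ ∈ Ioo 0 T) (h2 : t₂ ∈ Ioo 0 T) :
    |ux t₁ x₁ - ux t₂ x₂| ≤ 8 * (K / R) * (pd t₁ x₁ t₂ x₂ / R) ^ α := by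
  have hs0 : 0 ≤ Real.sqrt |t₁ - t₂| := Real.sqrt_nonneg _
  have hKR : 0 ≤ K / R := by positivity
  have b1 : ∀ t ∈ Ioo 0 T, ∀ s ∈ Ioo 0 T, ∀ x y, |ux t x - ux s y| ≤ 4 * (K / R) := by
    intro t ht s hs x y
    have := abs_sub (ux t x) (ux s y)
    linarith [hux t ht x, hux s hs y]
  have a1 : |ux t₁ x₁ - ux t₁ x₂| ≤ 4 * (K / R) * (|x₁ - x₂| / R) ^ α := by
    refine interp hα hα1 (abs_nonneg _) hR (by positivity) (b1 _ h1 _ h1 _ _) ?_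
    have := lip_of_deriv (h.dxx t₁ h1) (huxx t₁ h1) x₁ x₂
    have e : K / R ^ 2 * |x₁ - x₂| = K / R * (|x₁ - x₂| / R) := by field_simp
    rw [e] at this
    have : 0 ≤ K / R * (|x₁ - x₂| / R) := by positivity
    linarith
  have a2 : |ux t₁ x₂ - ux t₂ x₂| ≤ 4 * (K / R) * (Real.sqrt |t₁ - t₂| / R) ^ α := by
    refine interp hα hα1 hs0 hR (by positivity) (b1 _ h1 _ h2 _ _) ?_
    rcases eq_or_ne t₁ t₂ with rfl | hne
    · simp
    have hη : 0 < Real.sqrt |t₁ - t₂| := Real.sqrt_pos.2 (abs_pos.2 (sub_ne_zero.2 hne))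
    set η := Real.sqrt |t₁ - t₂| with hηd
    have hsq : |t₁ - t₂| = η ^ 2 := (Real.sq_sqrt (abs_nonneg _)).symm
    have s1 := slope_approx h huxx (x := x₂) h1 hη
    have s2 := slope_approx h huxx (x := x₂) h2 hη
    have l1 := lip_time h hut h1 h2 (x₂ + η)
    have l2 := lip_time h hut h1 h2 x₂
    rw [hsq] at l1 l2
    have s3 : |(u t₁ (x₂ + η) - u t₁ x₂) / η - (u t₂ (x₂ + η) - u t₂ x₂) / η| ≤
        2 * (K / R ^ 2 * η) := by
      rw [← sub_div, abs_div, abs_of_pos hη, div_le_iff₀ hη]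
      have : u t₁ (x₂ + η) - u t₁ x₂ - (u t₂ (x₂ + η) - u t₂ x₂) =
        (u t₁ (x₂ + η) - u t₂ (x₂ + η)) - (u t₁ x₂ - u t₂ x₂) := by ring
      rw [this]
      refine (abs_sub _ _).trans ?_
      nlinarith
    have e : 4 * (K / R) * (η / R) = 4 * (K / R ^ 2 * η) := by field_simp
    rw [e]
    rw [abs_le] at *
    constructor <;> linarith
  have c1 : (|x₁ - x₂| / R) ^ α ≤ (pd t₁ x₁ t₂ x₂ / R) ^ α := by
    unfold pd; gcongr; linarith
  have c2 : (Real.sqrt |t₁ - t₂| / R) ^ α ≤ (pd t₁ x₁ t₂ x₂ / R) ^ α := by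
    unfold pd; gcongr; linarith [abs_nonneg (x₁ - x₂)]
  have := abs_sub_le (ux t₁ x₁) (ux t₁ x₂) (ux t₂ x₂)
  have d1 := mul_le_mul_of_nonneg_left c1 (by positivity : 0 ≤ 4 * (K / R))
  have d2 := mul_le_mul_of_nonneg_left c2 (by positivity : 0 ≤ 4 * (K / R))
  linarith

lemma supN_le {T α K : ℝ} {w : ℝ → ℝ → ℝ} (hT : 0 < T) (hw : MemCa T α w) (hK : 0 ≤ K)
    (h : ∀ t ∈ Ioo 0 T, ∀ x, |w t x| ≤ K) : supN T w ≤ K := by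
  refine csInf_le ⟨0, fun M hM => hM.1⟩ ⟨hK, fun t ht x => ?_⟩
  have hcl : closure (Ioo 0 T) = Icc 0 T := closure_Ioo hT.ne
  refine le_on_closure (s := Ioo 0 T) (f := fun t => |w t x|) (g := fun _ => K)
    (fun t ht => h t ht x) ?_ continuousOn_const (by rwa [hcl])
  rw [hcl]
  exact (hw.1.comp (f := fun t => (t, x)) (by fun_prop) (fun t ht => ⟨ht, mem_univ _⟩)).abs

lemma hSemi_le {T α K : ℝ} {w : ℝ → ℝ → ℝ} (hT : 0 < T) (hα : 0 < α) (hw : MemCa T α w)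
    (hK : 0 ≤ K)
    (h : ∀ t₁ ∈ Ioo 0 T, ∀ t₂ ∈ Ioo 0 T, ∀ x₁ x₂, |w t₁ x₁ - w t₂ x₂| ≤ K * pd t₁ x₁ t₂ x₂ ^ α) :
    hSemi T α w ≤ K := by
  refine csInf_le ⟨0, fun M hM => hM.1⟩ ⟨hK, fun t₁ h1 t₂ h2 x₁ x₂ => ?_⟩
  have hcl : closure (Ioo 0 T ×ˢ Ioo 0 T) = Icc 0 T ×ˢ Icc 0 T := by
    rw [closure_prod_eq, closure_Ioo hT.ne]
  refine le_on_closure (s := Ioo 0 T ×ˢ Ioo 0 T)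
    (f := fun p : ℝ × ℝ => |w p.1 x₁ - w p.2 x₂|) (g := fun p : ℝ × ℝ => K * pd p.1 x₁ p.2 x₂ ^ α)
    (x := (t₁, t₂)) (fun p hp => h p.1 hp.1 p.2 hp.2 x₁ x₂) ?_ ?_ (by rw [hcl]; exact ⟨h1, h2⟩)
  · rw [hcl]
    refine ContinuousOn.abs (ContinuousOn.sub ?_ ?_)
    · exact hw.1.comp (f := fun p : ℝ × ℝ => (p.1, x₁)) (by fun_prop)
        (fun p hp => ⟨hp.1, mem_univ _⟩)
    · exact hw.1.comp (f := fun p : ℝ × ℝ => (p.2, x₂)) (by fun_prop)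
        (fun p hp => ⟨hp.2, mem_univ _⟩)
  · apply Continuous.continuousOn
    refine continuous_const.mul (Continuous.rpow_const ?_ (fun _ => Or.inr hα.le))
    unfold pd
    fun_prop

lemma le_supN {T α : ℝ} {w : ℝ → ℝ → ℝ} (hw : MemCa T α w) {t : ℝ} (ht : t ∈ Icc 0 T) (x : ℝ) :
    |w t x| ≤ supN T w := by
  obtain ⟨M, hM⟩ := hw.2.1
  refine le_csInf ⟨max M 0, le_max_right _ _, fun t ht x => (hM t ht x).trans (le_max_left _ _)⟩ ?_
  exact fun K hK => hK.2 t ht x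

lemma supN_nonneg (T : ℝ) (w : ℝ → ℝ → ℝ) : 0 ≤ supN T w := Real.sInf_nonneg fun _ h => h.1
lemma hSemi_nonneg (T α : ℝ) (w : ℝ → ℝ → ℝ) : 0 ≤ hSemi T α w := Real.sInf_nonneg fun _ h => h.1
lemma gSupN_nonneg (g : ℝ → ℝ) : 0 ≤ gSupN g := Real.sInf_nonneg fun _ h => h.1
lemma gHSemi_nonneg (α : ℝ) (g : ℝ → ℝ) : 0 ≤ gHSemi α g := Real.sInf_nonneg fun _ h => h.1

lemma pd_nonneg (a b c d : ℝ) : 0 ≤ pd a b c d := by unfold pd; positivity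

lemma le_hSemi {T α : ℝ} {w : ℝ → ℝ → ℝ} (hw : MemCa T α w) {t : ℝ}
    (h1 : t ∈ Icc 0 T) (x₁ x₂ : ℝ) :
    |w t x₁ - w t x₂| ≤ hSemi T α w * |x₁ - x₂| ^ α := by
  obtain ⟨M, hM⟩ := hw.2.2
  have hpd : pd t x₁ t x₂ = |x₁ - x₂| := by simp [pd]
  rcases eq_or_ne x₁ x₂ with rfl | hne
  · have := hSemi_nonneg T α w
    simp only [sub_self, abs_zero]
    positivity
  have hp : 0 < |x₁ - x₂| ^ α := Real.rpow_pos_of_pos (abs_pos.2 (sub_ne_zero.2 hne)) _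
  rw [← div_le_iff₀ hp]
  refine le_csInf ⟨max M 0, le_max_right _ _, fun t₁ ht₁ t₂ ht₂ x y => (hM t₁ ht₁ t₂ ht₂ x y).trans
    (mul_le_mul_of_nonneg_right (le_max_left _ _) (Real.rpow_nonneg (pd_nonneg _ _ _ _) _))⟩ ?_
  intro K hK
  rw [div_le_iff₀ hp, ← hpd]
  exact hK.2 t h1 t h1 x₁ x₂

lemma le_gSupN {g : ℝ → ℝ} (h : ∃ M, ∀ x, |g x| ≤ M) (x : ℝ) : |g x| ≤ gSupN g := by
  obtain ⟨M, hM⟩ := h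
  refine le_csInf ⟨max M 0, le_max_right _ _, fun x => (hM x).trans (le_max_left _ _)⟩ ?_
  exact fun K hK => hK.2 x

lemma exp_lip {a b c : ℝ} (ha : a ≤ c) (hb : b ≤ c) :
    |Real.exp a - Real.exp b| ≤ Real.exp c * |a - b| := by
  have key : ∀ a b, b ≤ a → a ≤ c → Real.exp a - Real.exp b ≤ Real.exp c * (a - b) := by
    intro a b hba hac
    have h1 := Real.add_one_le_exp (b - a)
    have h2 : Real.exp b = Real.exp a * Real.exp (b - a) := by rw [← Real.exp_add]; congr 1; ring
    have h3 := Real.exp_le_exp.2 hac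
    have h4 := Real.exp_pos a
    nlinarith [mul_le_mul_of_nonneg_left h1 h4.le, mul_le_mul_of_nonneg_right h3 (sub_nonneg.2 hba)]
  rcases le_total b a with h | h
  · rw [abs_of_nonneg (sub_nonneg.2 (Real.exp_le_exp.2 h)), abs_of_nonneg (sub_nonneg.2 h)]
    exact key a b h ha
  · rw [abs_sub_comm, abs_sub_comm a b, abs_of_nonneg (sub_nonneg.2 (Real.exp_le_exp.2 h)),
      abs_of_nonneg (sub_nonneg.2 h)]
    exact key b a h hb
lemma sup_upper {T L κ Gs : ℝ} {u ut ux uxx b : ℝ → ℝ → ℝ} (h : Reg T u ut ux uxx)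
    (hW : ∃ W, ∀ t ∈ Icc 0 T, ∀ x, |u t x| ≤ W) (hL : 0 ≤ L) (hκ : 0 ≤ κ)
    (hb : ∀ t ∈ Ioo 0 T, ∀ x, |b t x| ≤ L) (hT : ∀ x, u T x ≤ Gs)
    (hop : ∀ t ∈ Ioo 0 T, ∀ x, Gs < u t x → 0 ≤ ut t x + κ + 1/2 * uxx t x - b t x * ux t x) :
    ∀ t ∈ Ioo 0 T, ∀ x, u t x ≤ Gs + κ * T := by
  obtain ⟨W, hW⟩ := hW
  have hreg : Reg T (fun t x => u t x - (Gs + κ * (T - t))) (fun t x => ut t x + κ) ux uxx := by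
    refine ⟨h.c.sub (by fun_prop), fun t ht x => ?_, fun t ht x => (h.dx t ht x).sub_const _, h.dxx⟩
    have a : HasDerivAt (fun t => Gs + κ * (T - t)) (κ * (-1)) t :=
      (((hasDerivAt_id t).const_sub T).const_mul κ).const_add Gs
    exact ((h.dt t ht x).sub a).congr_deriv (by ring)
  intro t ht x
  have := mp_line (W := W - Gs) (b := b) hreg ?_ hL hb ?_ ?_ t ht x
  · have : κ * (T - t) ≤ κ * T := by
      apply mul_le_mul_of_nonneg_left _ hκ; linarith [ht.1]
    linarith
  · intro t ht x
    have := mul_nonneg hκ (sub_nonneg.2 ht.2)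
    have := hW t ht x
    linarith [le_abs_self (u t x)]
  · intro x; have := hT x; simp only [sub_self]; linarith
  · intro t ht x hpos
    have := mul_nonneg hκ (sub_nonneg.2 ht.2.le)
    exact hop t ht x (by linarith)

lemma slice1 {T γ μ N X Y M : ℝ} {u ut ux uxx lam E : ℝ → ℝ → ℝ} (h : Reg T u ut ux uxx)
    (hγ : 0 < γ) (hμ : 0 < μ) (hN : 0 ≤ N) (hX : 0 ≤ X) (hY : 1 ≤ Y) (hXY : X ≤ Y)
    (hNY : 3 * N ≤ Y) (hM : μ ≤ M)
    (hu : ∀ t ∈ Icc 0 T, ∀ x, |u t x| ≤ M / γ)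
    (hb : ∃ M, ∀ t ∈ Ioo 0 T, ∀ x, |ux t x| ≤ M)
    (hl : ∀ t ∈ Ioo 0 T, ∀ x, |lam t x| ≤ N)
    (hE : ∀ t ∈ Ioo 0 T, ∀ x, |E t x| ≤ μ / γ * X ^ 2)
    (heq : ∀ t ∈ Ioo 0 T, ∀ x,
      ut t x + 1/2 * uxx t x = lam t x * ux t x - (lam t x)^2 / (2 * γ) + E t x)
    (hG : ∀ x y, |u T x - u T y| ≤ M / γ * |x - y|) :
    (∀ t ∈ Ioo 0 T, ∀ x, |ut t x + 1/2 * uxx t x| ≤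
      N * |ux t x| + (1 / (2 * γ) + μ / γ) * Y ^ 2) ∧
    ∀ t ∈ Ioo 0 T, ∀ x, |ux t x| ≤ 2 * (2 / γ + 3/2 * (1 / (2 * γ) + μ / γ) / μ) * M * Y := by
  have hY0 : 0 < Y := by linarith
  have hM0 : 0 < M := by linarith
  set c0 := 1 / (2 * γ) + μ / γ with hc0
  have hc0p : 0 < c0 := by positivity
  have hf : ∀ t ∈ Ioo 0 T, ∀ x, |ut t x + 1/2 * uxx t x| ≤ N * |ux t x| + c0 * Y ^ 2 := by
    intro t ht x
    rw [heq t ht x]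
    have a1 : |lam t x * ux t x| ≤ N * |ux t x| := by
      rw [abs_mul]; exact mul_le_mul_of_nonneg_right (hl t ht x) (abs_nonneg _)
    have a2 : |(lam t x)^2 / (2 * γ)| ≤ 1 / (2 * γ) * Y ^ 2 := by
      rw [abs_of_nonneg (by positivity), div_eq_mul_one_div, mul_comm]
      rw [← sq_abs (lam t x)]
      have := (hl t ht x).trans (by linarith : N ≤ Y)
      gcongr
    have a3 : |E t x| ≤ μ / γ * Y ^ 2 := (hE t ht x).trans (by gcongr)
    have := abs_add_le (lam t x * ux t x - (lam t x)^2 / (2 * γ)) (E t x)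
    have := abs_sub (lam t x * ux t x) ((lam t x)^2 / (2 * γ))
    rw [hc0]; linarith
  refine ⟨hf, fun t ht x => ?_⟩
  have hP := slice_grad (R := Y⁻¹) h hu (by positivity : 0 < c0 * Y^2) hN (by positivity) hb hf
    (by positivity) (by rw [mul_inv_le_iff₀ hY0]; linarith) hG t ht x
  refine hP.trans ?_
  rw [div_inv_eq_mul]
  have e1 : 3 / 2 * (c0 * Y ^ 2) * Y⁻¹ = 3 / 2 * c0 * Y := by field_simp
  rw [e1]
  have e2 : 2 * (2 / γ + 3/2 * c0 / μ) * M * Y =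
    2 * (M / γ * Y + M / γ * Y + 3/2 * c0 * (M / μ) * Y) := by field_simp; ring
  rw [e2]
  have e3 : M / γ ≤ M / γ * Y := le_mul_of_one_le_right (by positivity) hY
  have e4 : 3 / 2 * c0 ≤ 3/2 * c0 * (M / μ) :=
    le_mul_of_one_le_right (by positivity) ((one_le_div hμ).2 hM)
  have e5 : 3 / 2 * c0 * Y ≤ 3/2 * c0 * (M / μ) * Y := by gcongr
  linarith

lemma fdiff {a b p q e1 e2 N P W θ γ : ℝ} (hγ : 0 < γ) (ha : |a| ≤ N) (hb : |b| ≤ N)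
    (hab : |a - b| ≤ N * θ) (hq : |q| ≤ P) (he : |e1 - e2| ≤ W * θ) :
    |(a * p - a^2 / (2 * γ) + e1) - (b * q - b^2 / (2 * γ) + e2)| ≤
      N * |p - q| + (N * P + N^2 / γ + W) * θ := by
  have hN : 0 ≤ N := (abs_nonneg _).trans ha
  have e : (a * p - a^2 / (2 * γ) + e1) - (b * q - b^2 / (2 * γ) + e2) =
    a * (p - q) + ((a - b) * q + (-((a - b) * (a + b) / (2 * γ)) + (e1 - e2))) := by
    field_simp; ring
  rw [e]
  have b1 : |a * (p - q)| ≤ N * |p - q| := by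
    rw [abs_mul]; exact mul_le_mul_of_nonneg_right ha (abs_nonneg _)
  have b2 : |(a - b) * q| ≤ N * θ * P := by
    rw [abs_mul]; exact mul_le_mul hab hq (abs_nonneg _) ((abs_nonneg _).trans hab)
  have b3 : |-((a - b) * (a + b) / (2 * γ))| ≤ N ^ 2 / γ * θ := by
    rw [abs_neg, abs_div, abs_mul, abs_of_pos (by positivity : 0 < 2 * γ)]
    have : |a + b| ≤ 2 * N := (abs_add_le a b).trans (by linarith)
    have h1 : |a - b| * |a + b| ≤ N * θ * (2 * N) :=
      mul_le_mul hab this (abs_nonneg _) ((abs_nonneg _).trans hab)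
    rw [div_le_iff₀ (by positivity)]
    refine h1.trans (le_of_eq ?_)
    field_simp
  have := abs_add_le (a * (p - q)) ((a - b) * q + (-((a - b) * (a + b) / (2 * γ)) + (e1 - e2)))
  have := abs_add_le ((a - b) * q) (-((a - b) * (a + b) / (2 * γ)) + (e1 - e2))
  have := abs_add_le (-((a - b) * (a + b) / (2 * γ))) (e1 - e2)
  linarith

lemma slice2 {T α γ μ N Y M c1 w : ℝ} {u ut ux uxx lam E : ℝ → ℝ → ℝ} (h : Reg T u ut ux uxx)
    (hα : 0 < α) (hα1 : α ≤ 1)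
    (hγ : 0 < γ) (hμ : 0 < μ) (hN : 0 ≤ N) (hY : 1 ≤ Y)
    (hNY : 16 / α * N ≤ Y) (hM : μ ≤ M) (hc1 : 0 ≤ c1) (hw : 0 ≤ w)
    (hP : ∀ t ∈ Ioo 0 T, ∀ x, |ux t x| ≤ c1 * M * Y)
    (hb : ∃ M, ∀ t ∈ Ioo 0 T, ∀ x, |uxx t x| ≤ M)
    (hl : ∀ t ∈ Ioo 0 T, ∀ x, |lam t x| ≤ N)
    (hlh : ∀ t ∈ Ioo 0 T, ∀ x y, |lam t x - lam t y| ≤ N * |x - y| ^ α)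
    (hE : ∀ t ∈ Ioo 0 T, ∀ x y, |E t x - E t y| ≤ w * M * Y ^ 2 * (|x - y| / Y⁻¹) ^ α)
    (heq : ∀ t ∈ Ioo 0 T, ∀ x,
      ut t x + 1/2 * uxx t x = lam t x * ux t x - (lam t x)^2 / (2 * γ) + E t x)
    (hG : ∀ x r s, 0 ≤ r → 0 ≤ s → |V4 u x T r s| ≤ 4 * (M / γ) * r * s) :
    ∀ t ∈ Ioo 0 T, ∀ x, |uxx t x| ≤
      2 * (1 / γ + c1 + 8 / α * (2 * c1 + (c1 + 1 / (γ * μ) + w))) * M * Y ^ 2 := by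
  have hY0 : 0 < Y := by linarith
  have hM0 : 0 < M := by linarith
  have hNY' : N ≤ Y := by
    have : 1 ≤ 16 / α := by rw [one_le_div hα]; linarith
    nlinarith
  intro t ht x
  have hS := slice_hess (R := Y⁻¹) (L := N) (P := c1 * M * Y)
    (H1 := (c1 + 1 / (γ * μ) + w) * M * Y ^ 2) (G := M / γ) h hα hα1 (by positivity)
    (by positivity) (by positivity) hN hP (by positivity) hb ?_
    (by rw [mul_inv_le_iff₀ hY0]; linarith) hG t ht x
  · refine hS.trans ?_
    rw [div_inv_eq_mul]
    have e1 : M / γ ≤ M / γ * Y ^ 2 := le_mul_of_one_le_right (by positivity) (one_le_pow₀ hY)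
    have e2 : 8 / α * (2 * N * (c1 * M * Y)) ≤ 8 / α * (2 * Y * (c1 * M * Y)) := by gcongr
    have e3 : 2 * (1 / γ + c1 + 8 / α * (2 * c1 + (c1 + 1 / (γ * μ) + w))) * M * Y ^ 2 =
      2 * (M / γ * Y ^ 2 + c1 * M * Y * Y + (8 / α * (2 * Y * (c1 * M * Y)) +
        8 / α * ((c1 + 1 / (γ * μ) + w) * M * Y ^ 2))) := by ring
    rw [e3]
    linarith
  · intro t ht x y
    rw [heq t ht x, heq t ht y]
    have hθ : |x - y| ^ α ≤ (|x - y| / Y⁻¹) ^ α := by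
      rw [div_inv_eq_mul]
      gcongr
      exact le_mul_of_one_le_right (abs_nonneg _) hY
    refine (fdiff hγ (hl t ht x) (hl t ht y)
      ((hlh t ht x y).trans (mul_le_mul_of_nonneg_left hθ hN)) (hP t ht y) (hE t ht x y)).trans ?_
    gcongr
    have e1 : N * (c1 * M * Y) ≤ Y * (c1 * M * Y) := by gcongr
    have e2 : N ^ 2 / γ ≤ Y ^ 2 / γ * (M / μ) := by
      have : N ^ 2 / γ ≤ Y ^ 2 / γ := by gcongr
      exact this.trans (le_mul_of_one_le_right (by positivity) ((one_le_div hμ).2 hM))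
    have e3 : (c1 + 1 / (γ * μ) + w) * M * Y ^ 2 = Y * (c1 * M * Y) + Y ^ 2 / γ * (M / μ) +
      w * M * Y ^ 2 := by field_simp
    rw [e3]
    linarith

/-- the bounds for one slice in the scale `Y⁻¹` -/
def Scaled (T K Y : ℝ) (u ut ux uxx : ℝ → ℝ → ℝ) : Prop :=
  (∀ t ∈ Ioo 0 T, ∀ x, |u t x| ≤ K) ∧ (∀ t ∈ Ioo 0 T, ∀ x, |ux t x| ≤ K * Y) ∧
  (∀ t ∈ Ioo 0 T, ∀ x, |uxx t x| ≤ K * Y ^ 2) ∧ (∀ t ∈ Ioo 0 T, ∀ x, |ut t x| ≤ K * Y ^ 2)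

lemma Scaled.fin {T α K Y : ℝ} {u ut ux uxx : ℝ → ℝ → ℝ} (hT : 0 < T) (hα : 0 < α) (hα1 : α ≤ 1)
    (hK : 0 ≤ K) (hY : 0 < Y) (hm : MemC12a T α u ut ux uxx) (h : Scaled T K Y u ut ux uxx) :
    hSemi T α u ≤ 4 * K * Y ^ α ∧ supN T ux ≤ K * Y ∧ hSemi T α ux ≤ 8 * K * Y ^ (1 + α) := by
  obtain ⟨h1, h2, h3, h4⟩ := h
  have hR : Reg T u ut ux uxx := ⟨hm.memU.1, hm.hasUt, hm.hasUx, hm.hasUxx⟩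
  have hYi : 0 < Y⁻¹ := by positivity
  have e1 : K / Y⁻¹ = K * Y := div_inv_eq_mul _ _
  have e2 : K / Y⁻¹ ^ 2 = K * Y ^ 2 := by rw [inv_pow, div_inv_eq_mul]
  have e3 : ∀ d : ℝ, 0 ≤ d → (d / Y⁻¹) ^ α = Y ^ α * d ^ α := by
    intro d hd; rw [div_inv_eq_mul, Real.mul_rpow hd hY.le, mul_comm]
  refine ⟨?_, ?_, ?_⟩
  · refine hSemi_le hT hα hm.memU (by positivity) ?_
    intro t₁ ht₁ t₂ ht₂ x₁ x₂
    have := scale_u (x₁ := x₁) (x₂ := x₂) hR hα hα1 hK hYi h1 (by rw [e1]; exact h2)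
      (by rw [e2]; exact h4) ht₁ ht₂
    rw [e3 _ (pd_nonneg _ _ _ _)] at this
    linarith
  · exact supN_le hT hm.memUx (by positivity) h2
  · refine hSemi_le hT hα hm.memUx (by positivity) ?_
    intro t₁ ht₁ t₂ ht₂ x₁ x₂
    have := scale_ux (x₁ := x₁) (x₂ := x₂) hR hα hα1 hK hYi (by rw [e1]; exact h2)
      (by rw [e2]; exact h3) (by rw [e2]; exact h4) ht₁ ht₂
    rw [e3 _ (pd_nonneg _ _ _ _), e1] at this
    rw [Real.rpow_add hY, Real.rpow_one]
    linarith

lemma mk_scaled {T γ c0 c1 c4 μ N Y M : ℝ} {u ut ux uxx : ℝ → ℝ → ℝ}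
    (hγ : 0 < γ) (hμ : 0 < μ) (hY : 1 ≤ Y) (hM : μ ≤ M) (hNY : N ≤ Y) (hN : 0 ≤ N)
    (hc0 : 0 ≤ c0) (hc1 : 0 ≤ c1) (hc4 : 0 ≤ c4)
    (hu : ∀ t ∈ Icc 0 T, ∀ x, |u t x| ≤ M / γ)
    (hux : ∀ t ∈ Ioo 0 T, ∀ x, |ux t x| ≤ c1 * M * Y)
    (huxx : ∀ t ∈ Ioo 0 T, ∀ x, |uxx t x| ≤ c4 * M * Y ^ 2)
    (hf : ∀ t ∈ Ioo 0 T, ∀ x, |ut t x + 1/2 * uxx t x| ≤ N * |ux t x| + c0 * Y ^ 2) :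
    Scaled T ((1 / γ + c1 + c4 + c0 / μ) * M) Y u ut ux uxx := by
  have hY0 : 0 < Y := by linarith
  have hM0 : 0 < M := by linarith
  refine ⟨fun t ht x => (hu t ⟨ht.1.le, ht.2.le⟩ x).trans ?_, fun t ht x => (hux t ht x).trans ?_,
    fun t ht x => (huxx t ht x).trans ?_, fun t ht x => ?_⟩
  · rw [div_eq_mul_one_div, mul_comm]
    have : 0 ≤ c0 / μ := by positivity
    gcongr; linarith
  · have : 0 ≤ c0 / μ := by positivity
    have : 0 ≤ 1 / γ := by positivity
    gcongr; linarith
  · have : 0 ≤ c0 / μ := by positivity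
    have : 0 ≤ 1 / γ := by positivity
    gcongr; linarith
  · have a1 := hf t ht x
    have a2 : N * |ux t x| ≤ Y * (c1 * M * Y) := mul_le_mul hNY (hux t ht x) (abs_nonneg _) hY0.le
    have a3 : c0 * Y ^ 2 ≤ c0 * Y ^ 2 * (M / μ) :=
      le_mul_of_one_le_right (by positivity) ((one_le_div hμ).2 hM)
    have a4 := huxx t ht x
    have e : (1 / γ + c1 + c4 + c0 / μ) * M * Y ^ 2 = 1 / γ * M * Y ^ 2 + Y * (c1 * M * Y) +
      c4 * M * Y ^ 2 + c0 * Y ^ 2 * (M / μ) := by field_simp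
    have a5 : 0 ≤ 1 / γ * M * Y ^ 2 := by positivity
    have a6 : 0 ≤ c4 * M * Y ^ 2 := by positivity
    have a7 : |ut t x| ≤ |ut t x + 1/2 * uxx t x| + 1/2 * |uxx t x| := by
      have := abs_sub (ut t x + 1/2 * uxx t x) (1/2 * uxx t x)
      rw [add_sub_cancel_right, abs_mul, abs_of_pos (by norm_num : (0:ℝ) < 1/2)] at this
      exact this
    rw [e]
    linarith
lemma final_pow {α μ M Q k q m β : ℝ} (hμ : 0 < μ) (hM : μ ≤ M) (hQ : 0 < Q) (hk : 0 < k)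
    (hq : 0 < q) (hQM : Q ^ 2 ≤ q * M) (hβ : 0 ≤ β) (hβ2 : β ≤ 1 + α) (hα1 : α ≤ 1) (hα : 0 < α) :
    M * (k * Q * Real.exp m) ^ β ≤
      k ^ β * q ^ (β / 2) * μ ^ ((1 + β / 2) - (2 + α / 2)) * M ^ (2 + α / 2) *
        Real.exp (β * m) := by
  have hM0 : 0 < M := by linarith
  have h1 : Q ^ β ≤ q ^ (β / 2) * M ^ (β / 2) := by
    rw [← Real.mul_rpow hq.le hM0.le]
    have : Q ^ β = (Q ^ 2) ^ (β / 2) := by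
      rw [← Real.rpow_natCast, ← Real.rpow_mul hQ.le]; congr 1; push_cast; ring
    rw [this]
    gcongr
  have h2 : M * M ^ (β / 2) ≤ μ ^ ((1 + β / 2) - (2 + α / 2)) * M ^ (2 + α / 2) := by
    have e1 : M * M ^ (β / 2) = M ^ ((1 + β / 2) - (2 + α / 2)) * M ^ (2 + α / 2) := by
      rw [← Real.rpow_add hM0]
      nth_rewrite 1 [← Real.rpow_one M]
      rw [← Real.rpow_add hM0]; congr 1; ring
    rw [e1]
    gcongr ?_ * _
    exact Real.rpow_le_rpow_of_nonpos hμ hM (by linarith)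
  rw [Real.mul_rpow (by positivity) (Real.exp_pos _).le, Real.mul_rpow hk.le hQ.le,
    ← Real.exp_mul, mul_comm m β]
  calc M * (k ^ β * Q ^ β * Real.exp (β * m))
      ≤ M * (k ^ β * (q ^ (β / 2) * M ^ (β / 2)) * Real.exp (β * m)) := by gcongr
    _ = k ^ β * q ^ (β / 2) * Real.exp (β * m) * (M * M ^ (β / 2)) := by ring
    _ ≤ k ^ β * q ^ (β / 2) * Real.exp (β * m) *
        (μ ^ ((1 + β / 2) - (2 + α / 2)) * M ^ (2 + α / 2)) := by gcongr
    _ = _ := by ring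

lemma g_facts {α γ M : ℝ} {g : ℝ → ℝ} (hγ : 0 < γ) (hg : MemC2a α g) (hM : γ * gNorm2a α g ≤ M) :
    (∀ x, HasDerivAt g (deriv g x) x) ∧ (∀ x, HasDerivAt (deriv g) (deriv (deriv g) x) x) ∧
    (∀ x, |g x| ≤ gSupN g) ∧
    (∀ x, |deriv g x| ≤ M / γ) ∧ (∀ x, |deriv (deriv g) x| ≤ M / γ) := by
  obtain ⟨hc, ⟨B, hB⟩, -⟩ := hg
  have h1 : ∀ x, HasDerivAt g (deriv g x) x :=
    fun x => (hc.differentiable (by norm_num) x).hasDerivAt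
  have hc1 : ContDiff ℝ 1 (deriv g) := by
    have : ContDiff ℝ (1 + 1) g := by norm_num; exact hc
    exact (contDiff_succ_iff_deriv.1 this).2.2
  have h2 : ∀ x, HasDerivAt (deriv g) (deriv (deriv g) x) x :=
    fun x => (hc1.differentiable (by norm_num) x).hasDerivAt
  have n0 := gSupN_nonneg g
  have n1 := gSupN_nonneg (deriv g)
  have n2 := gSupN_nonneg (deriv (deriv g))
  have n3 := gHSemi_nonneg α (deriv (deriv g))
  have hM' : gNorm2a α g ≤ M / γ := by rw [le_div_iff₀ hγ]; linarith
  unfold gNorm2a at hM'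
  refine ⟨h1, h2, le_gSupN ⟨B, fun x => (hB x).1⟩, fun x => ?_, fun x => ?_⟩
  · have := le_gSupN (g := deriv g) ⟨B, fun x => (hB x).2.1⟩ x
    linarith
  · have := le_gSupN (g := deriv (deriv g)) ⟨B, fun x => (hB x).2.2⟩ x
    linarith

set_option maxHeartbeats 4000000 in
lemma core {α γ μ : ℝ} (hα0 : 0 < α) (hα1 : α ≤ 1) (hγ : 0 < γ) (hμ : 0 < μ) :
    ∃ c : ℝ, 0 < c ∧ ∀ T : ℝ, 0 < T → ∀ (lam0 lam1 : ℝ → ℝ → ℝ) (g0 g1 : ℝ → ℝ),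
      MemC2a α g0 → MemC2a α g1 →
      ∀ u0 u0t u0x u0xx u1 u1t u1x u1xx : ℝ → ℝ → ℝ,
        SolvesPDDE T α γ μ lam0 lam1 g0 g1 u0 u0t u0x u0xx u1 u1t u1x u1xx →
      ∀ gs L N m M : ℝ, 0 ≤ L → L ≤ N → μ ≤ M → m ≤ M → gSupN g0 ≤ gs → gSupN g1 ≤ gs →
        m = γ * gs + (1/2) * T * L ^ 2 + μ * T →
        γ * gNorm2a α g0 ≤ M → γ * gNorm2a α g1 ≤ M →
        (∀ t ∈ Icc 0 T, ∀ x, |lam0 t x| ≤ L) → (∀ t ∈ Icc 0 T, ∀ x, |lam1 t x| ≤ L) →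
        (∀ t ∈ Icc 0 T, ∀ x y, |lam0 t x - lam0 t y| ≤ N * |x - y| ^ α) →
        (∀ t ∈ Icc 0 T, ∀ x y, |lam1 t x - lam1 t y| ≤ N * |x - y| ^ α) →
        Scaled T (c * M) (16 / α * (1 + N) * Real.exp m) u0 u0t u0x u0xx ∧
        Scaled T (c * M) (16 / α * (1 + N) * Real.exp m) u1 u1t u1x u1xx := by
  set c0 := 1 / (2 * γ) + μ / γ with hc0
  set c1 := 2 * (2 / γ + 3/2 * c0 / μ) with hc1
  set c2 := 2 / γ + c1 with hc2
  set w := 2 * μ * c2 with hw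
  set c4 := 2 * (1 / γ + c1 + 8 / α * (2 * c1 + (c1 + 1 / (γ * μ) + w))) with hc4
  have p0 : 0 < c0 := by positivity
  have p1 : 0 < c1 := by positivity
  have p2 : 0 < c2 := by positivity
  have pw : 0 < w := by positivity
  have p4 : 0 < c4 := by positivity
  refine ⟨1 / γ + c1 + c4 + c0 / μ, by positivity, ?_⟩
  intro T hT lam0 lam1 g0 g1 hg0 hg1 u0 u0t u0x u0xx u1 u1t u1x u1xx hsol gs L N m M hL hLN hμM hmM
    hgs0 hgs1 hm hgn0 hgn1 hl0 hl1 hlh0 hlh1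
  obtain ⟨hm0, hm1, heq1, hT1, heq0, hT0⟩ := hsol
  have R0 : Reg T u0 u0t u0x u0xx := ⟨hm0.memU.1, hm0.hasUt, hm0.hasUx, hm0.hasUxx⟩
  have R1 : Reg T u1 u1t u1x u1xx := ⟨hm1.memU.1, hm1.hasUt, hm1.hasUx, hm1.hasUxx⟩
  obtain ⟨da0, db0, gb0, gc0, gd0⟩ := g_facts hγ hg0 hgn0
  obtain ⟨da1, db1, gb1, gc1, gd1⟩ := g_facts hγ hg1 hgn1
  have hN : 0 ≤ N := hL.trans hLN
  have hM0 : 0 < M := by linarith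
  have hgs : 0 ≤ gs := (gSupN_nonneg g0).trans hgs0
  have hm0' : 0 ≤ m := by rw [hm]; positivity
  set X := Real.exp m with hX
  have hX1 : 1 ≤ X := Real.one_le_exp hm0'
  set Y := 16 / α * (1 + N) * X with hYd
  have hk : 16 ≤ 16 / α := by rw [le_div_iff₀ hα0]; linarith
  have hkN : 16 / α * (1 + N) ≤ Y := le_mul_of_one_le_right (by positivity) hX1
  have hNY : 16 / α * N ≤ Y := by linarith
  have h16 : 16 * N ≤ Y := (mul_le_mul_of_nonneg_right hk hN).trans hNY
  have hkN1 : 1 ≤ 16 / α * (1 + N) := by nlinarith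
  have hXY : X ≤ Y := le_mul_of_one_le_left (by linarith) hkN1
  have hY1 : 1 ≤ Y := hX1.trans hXY
  have hY0 : 0 < Y := by linarith
  -- sup bounds
  have hI : ∀ t ∈ Ioo 0 T, t ∈ Icc 0 T := fun t ht => ⟨ht.1.le, ht.2.le⟩
  have hIo : ∀ t ∈ Ioo 0 T, t ∈ Ico 0 T := fun t ht => ⟨ht.1.le, ht.2⟩
  have hlsq : ∀ lam : ℝ → ℝ → ℝ, (∀ t ∈ Icc 0 T, ∀ x, |lam t x| ≤ L) → ∀ t ∈ Ioo 0 T, ∀ x,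
      (lam t x) ^ 2 / (2 * γ) ≤ L ^ 2 / (2 * γ) := by
    intro lam hl t ht x
    rw [← sq_abs]
    have := hl t (hI t ht) x
    gcongr
  have hlsq0 : ∀ a : ℝ, 0 ≤ a ^ 2 / (2 * γ) := fun a => by positivity
  have U1 : ∀ t ∈ Ioo 0 T, ∀ x, u1 t x ≤ gs + (L ^ 2 / (2 * γ)) * T := by
    refine sup_upper (b := lam1) R1 hm1.memU.2.1 hL (by positivity)
      (fun t ht x => hl1 t (hI t ht) x) ?_ ?_
    · intro x; rw [hT1]; linarith [le_abs_self (g1 x), gb1 x]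
    · intro t ht x _
      linarith [heq1 t (hIo t ht) x, hlsq lam1 hl1 t ht x]
  have L1 : ∀ t ∈ Ioo 0 T, ∀ x, -u1 t x ≤ gs + 0 * T := by
    refine sup_upper (b := lam1) R1.neg ?_ hL le_rfl
      (fun t ht x => hl1 t (hI t ht) x) ?_ ?_
    · obtain ⟨W, hW⟩ := hm1.memU.2.1
      exact ⟨W, fun t ht x => by rw [abs_neg]; exact hW t ht x⟩
    · intro x; rw [hT1]; linarith [neg_abs_le (g1 x), gb1 x]
    · intro t ht x _
      linarith [heq1 t (hIo t ht) x, hlsq0 (lam1 t x)]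
  have U0 : ∀ t ∈ Ioo 0 T, ∀ x, u0 t x ≤ gs + (L ^ 2 / (2 * γ) + μ / γ) * T := by
    refine sup_upper (b := lam0) R0 hm0.memU.2.1 hL (by positivity)
      (fun t ht x => hl0 t (hI t ht) x) ?_ ?_
    · intro x; rw [hT0]; linarith [le_abs_self (g0 x), gb0 x]
    · intro t ht x _
      have : 0 ≤ μ / γ * Real.exp (-γ * (u1 t x - u0 t x)) := by positivity
      linarith [heq0 t (hIo t ht) x, hlsq lam0 hl0 t ht x]
  have L0 : ∀ t ∈ Ioo 0 T, ∀ x, -u0 t x ≤ gs + 0 * T := by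
    refine sup_upper (b := lam0) R0.neg ?_ hL le_rfl
      (fun t ht x => hl0 t (hI t ht) x) ?_ ?_
    · obtain ⟨W, hW⟩ := hm0.memU.2.1
      exact ⟨W, fun t ht x => by rw [abs_neg]; exact hW t ht x⟩
    · intro x; rw [hT0]; linarith [neg_abs_le (g0 x), gb0 x]
    · intro t ht x hlt
      have h1 := L1 t ht x
      have : Real.exp (-γ * (u1 t x - u0 t x)) ≤ 1 := by
        rw [Real.exp_le_one_iff]
        have : 0 ≤ u1 t x - u0 t x := by linarith
        nlinarith
      have : μ / γ * (Real.exp (-γ * (u1 t x - u0 t x)) - 1) ≤ 0 :=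
        mul_nonpos_of_nonneg_of_nonpos (by positivity) (by linarith)
      linarith [heq0 t (hIo t ht) x, hlsq0 (lam0 t x)]
  have emγ : m / γ = gs + (L ^ 2 / (2 * γ) + μ / γ) * T := by rw [hm]; field_simp; ring
  have hmγ : m / γ ≤ M / γ := by gcongr
  have hpos1 : 0 ≤ μ / γ * T := by positivity
  have hpos2 : 0 ≤ L ^ 2 / (2 * γ) * T := by positivity
  have B0 : ∀ t ∈ Icc 0 T, ∀ x, |u0 t x| ≤ M / γ := by
    intro t ht x
    refine (le_supN hm0.memU ht x).trans (supN_le hT hm0.memU (by positivity) ?_)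
    intro t ht x
    rw [abs_le']
    constructor
    · linarith [U0 t ht x]
    · linarith [L0 t ht x]
  have B1 : ∀ t ∈ Icc 0 T, ∀ x, |u1 t x| ≤ M / γ := by
    intro t ht x
    refine (le_supN hm1.memU ht x).trans (supN_le hT hm1.memU (by positivity) ?_)
    intro t ht x
    rw [abs_le']
    constructor
    · linarith [U1 t ht x]
    · linarith [L1 t ht x]
  have hexpb : ∀ t ∈ Ioo 0 T, ∀ x, -γ * (u1 t x - u0 t x) ≤ 2 * m := by
    intro t ht x
    have h1 : u0 t x - u1 t x ≤ 2 * (m / γ) := by linarith [U0 t ht x, L1 t ht x]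
    have h2 := mul_le_mul_of_nonneg_left h1 hγ.le
    have h3 : γ * (2 * (m / γ)) = 2 * m := by field_simp
    linarith
  have hX2 : Real.exp (2 * m) = X ^ 2 := by rw [hX, ← Real.exp_nat_mul]; norm_num
  -- source
  set E : ℝ → ℝ → ℝ := fun t x => μ / γ * (Real.exp (-γ * (u1 t x - u0 t x)) - 1) with hE
  have EQ0 : ∀ t ∈ Ioo 0 T, ∀ x,
      u0t t x + 1/2 * u0xx t x = lam0 t x * u0x t x - (lam0 t x)^2 / (2 * γ) + E t x :=
    fun t ht x => by linarith [heq0 t (hIo t ht) x]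
  have EQ1 : ∀ t ∈ Ioo 0 T, ∀ x, u1t t x + 1/2 * u1xx t x =
      lam1 t x * u1x t x - (lam1 t x)^2 / (2 * γ) + (fun _ _ => 0 : ℝ → ℝ → ℝ) t x :=
    fun t ht x => by linarith [heq1 t (hIo t ht) x]
  have EB : ∀ t ∈ Ioo 0 T, ∀ x, |E t x| ≤ μ / γ * X ^ 2 := by
    intro t ht x
    rw [hE, abs_mul, abs_of_pos (by positivity : 0 < μ / γ)]
    gcongr
    have h1 := Real.exp_le_exp.2 (hexpb t ht x)
    rw [hX2] at h1
    have h2 := Real.exp_pos (-γ * (u1 t x - u0 t x))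
    have h3 : 1 ≤ X ^ 2 := one_le_pow₀ hX1
    rw [abs_le]; constructor <;> linarith
  have term : ∀ (u : ℝ → ℝ → ℝ) (g : ℝ → ℝ), (∀ x, u T x = g x) →
      (∀ x, HasDerivAt g (deriv g x) x) → ∀ x, HasDerivAt (u T) (deriv g x) x := by
    intro u g hu hd x
    rw [show u T = g from funext hu]; exact hd x
  have t0 := term u0 g0 hT0 da0
  have t1 := term u1 g1 hT1 da1
  have bI : ∀ v : ℝ → ℝ → ℝ, MemCa T α v → ∃ M, ∀ t ∈ Ioo 0 T, ∀ x, |v t x| ≤ M := by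
    intro v hv
    obtain ⟨W, hW⟩ := hv.2.1
    exact ⟨W, fun t ht x => hW t (hI t ht) x⟩
  have ll0 : ∀ t ∈ Ioo 0 T, ∀ x, |lam0 t x| ≤ N := fun t ht x => (hl0 t (hI t ht) x).trans hLN
  have ll1 : ∀ t ∈ Ioo 0 T, ∀ x, |lam1 t x| ≤ N := fun t ht x => (hl1 t (hI t ht) x).trans hLN
  obtain ⟨F0, P0⟩ := slice1 (lam := lam0) (E := E) R0 hγ hμ hN (by linarith) hY1 hXY (by linarith) hμM
    B0 (bI _ hm0.memUx) ll0 EB EQ0 (lip_of_deriv t0 gc0)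
  obtain ⟨F1, P1⟩ := slice1 (lam := lam1) (E := fun _ _ => 0) R1 hγ hμ hN (by linarith) hY1 hXY
    (by linarith) hμM
    B1 (bI _ hm1.memUx) ll1 (fun t ht x => by simp only [abs_zero]; positivity) EQ1
    (lip_of_deriv t1 gc1)
  rw [← hc0] at F0 F1 P0 P1
  rw [← hc1] at P0 P1
  have hc2M : M / γ + M / γ ≤ c2 * M := by
    have : c2 * M = M / γ + M / γ + c1 * M := by rw [hc2]; ring
    rw [this]; linarith [mul_pos p1 hM0]
  have osc : ∀ (u ut ux uxx : ℝ → ℝ → ℝ), Reg T u ut ux uxx →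
      (∀ t ∈ Icc 0 T, ∀ x, |u t x| ≤ M / γ) → (∀ t ∈ Ioo 0 T, ∀ x, |ux t x| ≤ c1 * M * Y) →
      ∀ t ∈ Ioo 0 T, ∀ x y, |u t x - u t y| ≤ c2 * M * (|x - y| / Y⁻¹) ^ α := by
    intro u ut ux uxx hR hB hP t ht x y
    refine interp hα0 hα1 (abs_nonneg _) (by positivity) (by positivity) ?_ ?_
    · have := abs_sub (u t x) (u t y)
      linarith [hB t (hI t ht) x, hB t (hI t ht) y]
    · refine (lip_of_deriv (hR.dx t ht) (hP t ht) x y).trans ?_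
      rw [div_inv_eq_mul]
      have : c1 * M * Y * |x - y| ≤ c2 * M * Y * |x - y| := by
        gcongr
        rw [hc2]; have : 0 < 2 / γ := by positivity
        linarith
      linarith
  have EH : ∀ t ∈ Ioo 0 T, ∀ x y, |E t x - E t y| ≤ w * M * Y ^ 2 * (|x - y| / Y⁻¹) ^ α := by
    intro t ht x y
    have o0 := osc _ _ _ _ R0 B0 P0 t ht x y
    have o1 := osc _ _ _ _ R1 B1 P1 t ht x y
    set θ := (|x - y| / Y⁻¹) ^ α
    have hθ : 0 ≤ θ := by positivity
    have e1 := exp_lip (hexpb t ht x) (hexpb t ht y)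
    rw [hX2] at e1
    have e2 : E t x - E t y = μ / γ * (Real.exp (-γ * (u1 t x - u0 t x)) -
      Real.exp (-γ * (u1 t y - u0 t y))) := by simp only [hE]; ring
    have e3 : |-γ * (u1 t x - u0 t x) - -γ * (u1 t y - u0 t y)| ≤ γ * (2 * (c2 * M * θ)) := by
      have : -γ * (u1 t x - u0 t x) - -γ * (u1 t y - u0 t y) =
        γ * ((u0 t x - u0 t y) - (u1 t x - u1 t y)) := by ring
      rw [this, abs_mul, abs_of_pos hγ]
      gcongr
      have := abs_sub (u0 t x - u0 t y) (u1 t x - u1 t y)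
      linarith
    rw [e2, abs_mul, abs_of_pos (by positivity : 0 < μ / γ)]
    calc _ ≤ μ / γ * (X ^ 2 * (γ * (2 * (c2 * M * θ)))) := by
          apply mul_le_mul_of_nonneg_left _ (by positivity)
          exact e1.trans (mul_le_mul_of_nonneg_left e3 (by positivity))
      _ ≤ μ / γ * (Y ^ 2 * (γ * (2 * (c2 * M * θ)))) := by gcongr
      _ = _ := by rw [hw]; field_simp
  have S0 := slice2 (lam := lam0) (E := E) R0 hα0 hα1 hγ hμ hN hY1 hNY hμM p1.le pw.le P0
    (bI _ hm0.memUxx) ll0 (fun t ht => hlh0 t (hI t ht)) EH EQ0 (V4_term t0 db0 gd0)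
  have S1 := slice2 (lam := lam1) (E := fun _ _ => 0) R1 hα0 hα1 hγ hμ hN hY1 hNY hμM p1.le pw.le P1
    (bI _ hm1.memUxx) ll1 (fun t ht => hlh1 t (hI t ht))
    (fun t ht x y => by simp only [sub_self, abs_zero]; positivity) EQ1 (V4_term t1 db1 gd1)
  rw [← hc4] at S0 S1
  exact ⟨mk_scaled hγ hμ hY1 hμM (by linarith) hN p0.le p1.le p4.le B0 P0 S0 F0,
    mk_scaled hγ hμ hY1 hμM (by linarith) hN p0.le p1.le p4.le B1 P1 S1 F1⟩

set_option maxHeartbeats 4000000 in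
/-- gradient estimates for the solution of the PDDE Cauchy problem. -/
theorem stmt_7 (α γ μ : ℝ) (hα0 : 0 < α) (hα1 : α ≤ 1) (hγ : 0 < γ) (hμ : 0 < μ) :
    ∃ C : ℝ, 0 < C ∧
      ∀ T : ℝ, 0 < T →
      ∀ (lam0 lam1 : ℝ → ℝ → ℝ) (g0 g1 : ℝ → ℝ),
        MemCa T α lam0 → MemCa T α lam1 → MemC2a α g0 → MemC2a α g1 →
      ∀ u0 u0t u0x u0xx u1 u1t u1x u1xx : ℝ → ℝ → ℝ,
        SolvesPDDE T α γ μ lam0 lam1 g0 g1 u0 u0t u0x u0xx u1 u1t u1x u1xx →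
        max (hSemi T α u0) (hSemi T α u1) ≤
          C * (γ * max (gNorm2a α g0) (gNorm2a α g1) + (T + 1) * ((1/2) * (max (hNorm T α lam0) (hNorm T α lam1))^2 + μ)) ^ (2 + α/2) * Real.exp (α * (γ * max (gSupN g0) (gSupN g1) + (1/2) * T * (max (supN T lam0) (supN T lam1))^2 + μ * T)) ∧
        max (supN T u0x) (supN T u1x) ≤
          C * (γ * max (gNorm2a α g0) (gNorm2a α g1) + (T + 1) * ((1/2) * (max (hNorm T α lam0) (hNorm T α lam1))^2 + μ)) ^ (2 + α/2) * Real.exp (γ * max (gSupN g0) (gSupN g1) + (1/2) * T * (max (supN T lam0) (supN T lam1))^2 + μ * T) ∧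
        max (hSemi T α u0x) (hSemi T α u1x) ≤
          C * (γ * max (gNorm2a α g0) (gNorm2a α g1) + (T + 1) * ((1/2) * (max (hNorm T α lam0) (hNorm T α lam1))^2 + μ)) ^ (2 + α/2) * Real.exp ((1 + α) * (γ * max (gSupN g0) (gSupN g1) + (1/2) * T * (max (supN T lam0) (supN T lam1))^2 + μ * T)) ∧
        max (hNorm T α u0x) (hNorm T α u1x) ≤
          C * (γ * max (gNorm2a α g0) (gNorm2a α g1) + (T + 1) * ((1/2) * (max (hNorm T α lam0) (hNorm T α lam1))^2 + μ)) ^ (2 + α/2) * Real.exp ((1 + α) * (γ * max (gSupN g0) (gSupN g1) + (1/2) * T * (max (supN T lam0) (supN T lam1))^2 + μ * T)) := by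
  obtain ⟨c, hc, hcore⟩ := core hα0 hα1 hγ hμ
  set k := 16 / α with hk
  set q := 2 / μ + 4 with hq
  have hk0 : 0 < k := by positivity
  have hq0 : 0 < q := by positivity
  set D : ℝ → ℝ := fun β => k ^ β * q ^ (β / 2) * μ ^ ((1 + β / 2) - (2 + α / 2)) with hD
  have hDpos : ∀ β, 0 < D β := fun β => by simp only [hD]; positivity
  refine ⟨9 * c * (D α + D 1 + D (1 + α)), by
    have := hDpos α
    have := hDpos 1
    have := hDpos (1 + α)
    positivity, ?_⟩
  intro T hT lam0 lam1 g0 g1 hl0 hl1 hg0 hg1 u0 u0t u0x u0xx u1 u1t u1x u1xx hsol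
  set gn := max (gNorm2a α g0) (gNorm2a α g1) with hgn
  set gs := max (gSupN g0) (gSupN g1) with hgs
  set N := max (hNorm T α lam0) (hNorm T α lam1) with hN
  set L := max (supN T lam0) (supN T lam1) with hL
  set M := γ * gn + (T + 1) * (1 / 2 * N ^ 2 + μ) with hM
  set m := γ * gs + 1 / 2 * T * L ^ 2 + μ * T with hm
  have s0 := supN_nonneg T lam0
  have s1 := supN_nonneg T lam1
  have z0 := hSemi_nonneg T α lam0
  have z1 := hSemi_nonneg T α lam1
  have hn0 : hNorm T α lam0 = supN T lam0 + hSemi T α lam0 := rfl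
  have hn1 : hNorm T α lam1 = supN T lam1 + hSemi T α lam1 := rfl
  have hN0 : hNorm T α lam0 ≤ N := le_max_left _ _
  have hN1 : hNorm T α lam1 ≤ N := le_max_right _ _
  have hL0' : supN T lam0 ≤ L := le_max_left _ _
  have hL1' : supN T lam1 ≤ L := le_max_right _ _
  have hL0 : 0 ≤ L := s0.trans hL0'
  have hLN : L ≤ N := max_le (by linarith) (by linarith)
  have hgle : ∀ g, gSupN g ≤ gNorm2a α g := by
    intro g
    have n1 := gSupN_nonneg (deriv g)
    have n2 := gSupN_nonneg (deriv (deriv g))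
    have n3 := gHSemi_nonneg α (deriv (deriv g))
    unfold gNorm2a; linarith
  have hgsn : gs ≤ gn := max_le_max (hgle _) (hgle _)
  have hgs0 : 0 ≤ gs := (gSupN_nonneg g0).trans (le_max_left _ _)
  have hLN2 : L ^ 2 ≤ N ^ 2 := by gcongr
  have hN20 : 0 ≤ N ^ 2 := sq_nonneg N
  have hγgn : 0 ≤ γ * gn := mul_nonneg hγ.le (hgs0.trans hgsn)
  have hTT : 0 ≤ T * (1 / 2 * N ^ 2 + μ) := by positivity
  have hM1 : 1 / 2 * N ^ 2 + μ ≤ M := by rw [hM]; linarith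
  have hμM : μ ≤ M := by linarith
  have hmM : m ≤ M := by
    have a1 : γ * gs ≤ γ * gn := by gcongr
    have a2 : T * L ^ 2 ≤ T * N ^ 2 := by gcongr
    rw [hm, hM]; linarith
  have hgnM : γ * gn ≤ M := by
    rw [hM]; have : 0 ≤ (T + 1) * (1 / 2 * N ^ 2 + μ) := by positivity
    linarith
  have hM0 : 0 < M := by linarith
  obtain ⟨S0, S1⟩ := hcore T hT lam0 lam1 g0 g1 hg0 hg1 u0 u0t u0x u0xx u1 u1t u1x u1xx hsol
    gs L N m M hL0 hLN hμM hmM (le_max_left _ _) (le_max_right _ _) hm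
    ((mul_le_mul_of_nonneg_left (le_max_left _ _) hγ.le).trans hgnM)
    ((mul_le_mul_of_nonneg_left (le_max_right _ _) hγ.le).trans hgnM)
    (fun t ht x => (le_supN hl0 ht x).trans hL0') (fun t ht x => (le_supN hl1 ht x).trans hL1')
    (fun t ht x y => (le_hSemi hl0 ht x y).trans (by gcongr; linarith))
    (fun t ht x y => (le_hSemi hl1 ht x y).trans (by gcongr; linarith))
  have hQ : 0 < 1 + N := by linarith
  have hQM : (1 + N) ^ 2 ≤ q * M := by
    have h1 : 2 ≤ 2 / μ * M := by
      rw [div_mul_eq_mul_div, le_div_iff₀ hμ]; linarith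
    rw [hq]; nlinarith [sq_nonneg (N - 1)]
  have hm0 : 0 ≤ m := by rw [hm]; positivity
  set Y := k * (1 + N) * Real.exp m with hY
  have hk1 : 1 ≤ k := by rw [hk, one_le_div hα0]; linarith
  have hY1 : 1 ≤ Y := by
    have := Real.one_le_exp hm0
    have : 1 ≤ k * (1 + N) := by nlinarith
    rw [hY]; nlinarith
  have hY0 : 0 < Y := by linarith
  have fp : ∀ β, 0 ≤ β → β ≤ 1 + α → D β ≤ D α + D 1 + D (1 + α) →
      9 * (c * M) * Y ^ β ≤ 9 * c * (D α + D 1 + D (1 + α)) * M ^ (2 + α / 2) * Real.exp (β * m) := by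
    intro β hβ hβ2 hDβ
    have := final_pow (k := k) (m := m) hμ hμM hQ hk0 hq0 hQM hβ hβ2 hα1 hα0
    calc 9 * (c * M) * Y ^ β = 9 * c * (M * Y ^ β) := by ring
      _ ≤ 9 * c * (D β * M ^ (2 + α / 2) * Real.exp (β * m)) := by gcongr
      _ ≤ 9 * c * ((D α + D 1 + D (1 + α)) * M ^ (2 + α / 2) * Real.exp (β * m)) := by gcongr
      _ = _ := by ring
  have d1 := hDpos α
  have d2 := hDpos 1
  have d3 := hDpos (1 + α)
  have fα := fp α hα0.le (by linarith) (by linarith)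
  have f1 := fp 1 (by norm_num) (by linarith) (by linarith)
  have f2 := fp (1 + α) (by linarith) le_rfl (by linarith)
  rw [Real.rpow_one, one_mul] at f1
  have hcM : 0 < c * M := by positivity
  obtain ⟨x1, x2, x3⟩ := S0.fin hT hα0 hα1 hcM.le hY0 hsol.1
  obtain ⟨y1, y2, y3⟩ := S1.fin hT hα0 hα1 hcM.le hY0 hsol.2.1
  have v1 : 0 < c * M * Y ^ α := by positivity
  have v2 : 0 < c * M * Y := by positivity
  have v3 : 0 < c * M * Y ^ (1 + α) := by positivity
  have v4 : c * M * Y ≤ c * M * Y ^ (1 + α) := by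
    gcongr
    exact Real.self_le_rpow_of_one_le hY1 (by linarith)
  refine ⟨max_le ?_ ?_, max_le ?_ ?_, max_le ?_ ?_, max_le ?_ ?_⟩
  · linarith
  · linarith
  · linarith
  · linarith
  · linarith
  · linarith
  · have : hNorm T α u0x = supN T u0x + hSemi T α u0x := rfl
    linarith
  · have : hNorm T α u1x = supN T u1x + hSemi T α u1x := rfl
    linarith
end
end
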